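/- arXiv:1806.01877 — 2 statements merged into one kernel-verified Lean document; each statement's English description precedes it below -/
import Mathlib

section
/- Let F(x,ξ) = g_x(ξ,ξ)/ω_x(ξ) be a Kropina metric with ω closed; let ∇^g be the Levi-Civita connection of the pseudo-Riemannian metric g, and define the torsion-free affine connection ∇ with Christoffel symbols Γ_{ij}^k = (Γ^g)_{ij}^k + |ω|_g^{-2}(∇^g_i ω_j)ω^k. Then every geodesic of the Kropina metric F is, up to reparametrization, a geodesic of ∇. -/
open scoped BigOperators

/-- Partial derivative of `f` at `p` in the `k`-th coordinate direction. -/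
noncomputable def pd {n : ℕ} (f : (Fin n → ℝ) → ℝ) (p : Fin n → ℝ) (k : Fin n) : ℝ :=
  fderiv ℝ f p (Pi.single k 1)

/-- `ω(ξ)`, the denominator of the Kropina metric. -/
noncomputable def Fden {n : ℕ} (ω : Fin n → (Fin n → ℝ) → ℝ) (p ξ : Fin n → ℝ) : ℝ :=
  ∑ l, ω l p * ξ l

/-- `g(ξ,ξ)`, the numerator of the Kropina metric. -/
noncomputable def Fnum {n : ℕ} (g : Fin n → Fin n → (Fin n → ℝ) → ℝ) (p ξ : Fin n → ℝ) : ℝ :=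
  ∑ i, ∑ j, g i j p * ξ i * ξ j

/-- `∂F/∂x^k` for the Kropina Lagrangian `F = g(ξ,ξ)/ω(ξ)`. -/
noncomputable def Fx {n : ℕ} (g : Fin n → Fin n → (Fin n → ℝ) → ℝ)
    (ω : Fin n → (Fin n → ℝ) → ℝ) (k : Fin n) (p ξ : Fin n → ℝ) : ℝ :=
  (Fden ω p ξ)⁻¹ * (∑ i, ∑ j, pd (g i j) p k * ξ i * ξ j)
    - ((Fden ω p ξ)⁻¹) ^ 2 * (∑ l, pd (ω l) p k * ξ l) * Fnum g p ξ

/-- `∂F/∂ξ^k` for the Kropina Lagrangian `F = g(ξ,ξ)/ω(ξ)`. -/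
noncomputable def Fxi {n : ℕ} (g : Fin n → Fin n → (Fin n → ℝ) → ℝ)
    (ω : Fin n → (Fin n → ℝ) → ℝ) (k : Fin n) (p ξ : Fin n → ℝ) : ℝ :=
  2 * (Fden ω p ξ)⁻¹ * (∑ j, g k j p * ξ j)
    - ((Fden ω p ξ)⁻¹) ^ 2 * ω k p * Fnum g p ξ

/-- A curve `x` is a (Kropina) geodesic of `F = g/ω` on `s` if `ω(x') ≠ 0` there and
the Euler–Lagrange equations `d/dt (∂F/∂ξ^k) = ∂F/∂x^k` hold. -/
def IsKropinaGeodesicOn {n : ℕ} (g : Fin n → Fin n → (Fin n → ℝ) → ℝ)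
    (ω : Fin n → (Fin n → ℝ) → ℝ) (x : ℝ → Fin n → ℝ) (s : Set ℝ) : Prop :=
  ∀ t ∈ s, Fden ω (x t) (deriv x t) ≠ 0 ∧
    ∀ k, HasDerivAt (fun u => Fxi g ω k (x u) (deriv x u))
      (Fx g ω k (x t) (deriv x t)) t

/-- Christoffel symbols `Γ_{ij}^k` of the metric `g` (`ginv` its inverse). -/
noncomputable def Christoffel {n : ℕ} (g ginv : Fin n → Fin n → (Fin n → ℝ) → ℝ)
    (i j k : Fin n) (p : Fin n → ℝ) : ℝ :=
  (1 / 2) * ∑ l, ginv k l p * (pd (g j l) p i + pd (g i l) p j - pd (g i j) p l)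

open scoped Matrix Topology
open Filter Function Metric Set

/-!
Write `h = ω(γ')`. When `ω` is closed, the Euler–Lagrange equations of `g(ξ, ξ) / ω(ξ)` say that the
Euler–Lagrange expression of the energy `½ g(ξ, ξ)`, which is the covector `g(∇^g_γ' γ', ·)`, equals
`(h' / h) g(γ', ·) + μ ω` for some function `μ`. Hence `∇^g_γ' γ' = (h' / h) γ' + μ ω^♯`. On the
other hand `h' = (∇^g_γ' ω)(γ') + ω(∇^g_γ' γ')`, so pairing with `ω` gives
`μ |ω|² = -(∇^g_γ' ω)(γ')`. The correction term of `∇` therefore cancels `μ ω^♯`, and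
`∇_γ' γ' = (log |h|)' γ'`; note that `Real.log` is already `log |·|`, so the sign of `h` is
irrelevant. Running `γ` at speed `φ' = |h(φ)|⁻¹` removes the tangential acceleration.

A single solution of `φ' = |h(φ)|⁻¹` need not extend to a smooth function on `ℝ`, as it may run into
an endpoint of the domain where `h` degenerates. Instead `φ` is assembled from countably many local
solutions whose images cover the domain, cut off and translated to disjoint intervals centred at the
natural numbers.
-/

section Reparametrization

variable {E F : Type*} [NormedAddCommGroup E] [NormedSpace ℝ E]
  [NormedAddCommGroup F] [NormedSpace ℝ F] {r : ℕ∞}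

theorem contDiffOn_add_one_of_hasDerivAt_comp {v : E → E} {U : Set E} {α : ℝ → E} {I : Set ℝ}
    (hv : ContDiffOn ℝ r v U) (hI : IsOpen I) (hαU : MapsTo α I U)
    (hα : ∀ t ∈ I, HasDerivAt α (v (α t)) t) : ContDiffOn ℝ (r + 1) α I := by
  have step {m : ℕ∞} (hm : m ≤ r) (hαm : ContDiffOn ℝ m α I) : ContDiffOn ℝ (m + 1) α I := by
    refine (contDiffOn_succ_iff_deriv_of_isOpen hI).2
      ⟨fun t ht => (hα t ht).differentiableAt.differentiableWithinAt, by simp, ?_⟩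
    exact ((hv.of_le (mod_cast hm)).comp hαm hαU).congr fun t ht => (hα t ht).deriv
  have finite (m : ℕ) (hm : m ≤ r) : ContDiffOn ℝ m α I := by
    induction m with
    | zero => exact contDiffOn_zero.2 fun t ht => (hα t ht).continuousAt.continuousWithinAt
    | succ m ih =>
      have hm' : (m : ℕ∞) ≤ r := (Nat.cast_le.2 m.le_succ).trans hm
      exact mod_cast step hm' (ih hm')
  exact step le_rfl (contDiffOn_iff_forall_nat_le.2 finite)

theorem exists_contDiff_support_subset_eventuallyEq [HasContDiffBump E] {f : E → F} {x : E}
    {U : Set E} (hU : U ∈ 𝓝 x) (hf : ContDiffOn ℝ r f U) :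
    ∃ g : E → F, ContDiff ℝ r g ∧ support g ⊆ U ∧ g =ᶠ[𝓝 x] f := by
  obtain ⟨ε, hε, hεU⟩ := Metric.mem_nhds_iff.1 hU
  let χ : ContDiffBump x := ⟨ε / 4, ε / 2, by positivity, by linarith⟩
  have hχU : tsupport χ ⊆ ball x ε := by
    rw [χ.tsupport_eq]
    exact closedBall_subset_ball (half_lt_self hε)
  refine ⟨fun y => χ y • f y, contMDiff_iff_contDiff.1 (contMDiff_of_tsupport fun y hy => ?_),
    (support_smul_subset_left χ f).trans ((subset_tsupport χ).trans (hχU.trans hεU)), ?_⟩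
  · have hyε : y ∈ ball x ε := hχU (tsupport_smul_subset_left χ f hy)
    exact (χ.contDiffAt.smul
      (hf.contDiffAt (mem_of_superset (isOpen_ball.mem_nhds hyε) hεU))).contMDiffAt
  · filter_upwards [χ.eventuallyEq_one] with y hy
    simp [hy]

theorem exists_contDiff_eqOn_ball_natCast {f : ℕ → ℝ → F} (hf : ∀ m, ContDiff ℝ r (f m))
    (hsupp : ∀ m, support (f m) ⊆ ball 0 (1 / 2)) :
    ∃ Φ : ℝ → F, ContDiff ℝ r Φ ∧
      ∀ m : ℕ, EqOn Φ (fun t => f m (t - m)) (ball (m : ℝ) (1 / 2)) := by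
  have hball (m : ℕ) : support (fun t => f m (t - m)) ⊆ ball (m : ℝ) (1 / 2) := fun t ht => by
    simpa [Real.dist_eq] using hsupp m ht
  have hfin : LocallyFinite fun m : ℕ => support fun t => f m (t - m) := fun t => by
    refine ⟨ball t (1 / 2), ball_mem_nhds t one_half_pos,
      (finite_Iio ⌈t + 1⌉₊).subset ?_⟩
    rintro m ⟨u, hum, hut⟩
    have hmu := hball m hum
    rw [mem_ball, Real.dist_eq, abs_lt] at hmu hut
    exact Nat.lt_ceil.2 (by linarith)
  refine ⟨fun t => ∑ᶠ m : ℕ, f m (t - m), contMDiff_iff_contDiff.1 (contMDiff_finsum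
    (fun m => ((hf m).comp (contDiff_id.sub contDiff_const)).contMDiff) hfin), fun m t ht => ?_⟩
  refine finsum_eq_single _ m fun k hkm => ?_
  by_contra hk
  have hkt := hball k hk
  rw [mem_ball, Real.dist_eq, abs_lt] at ht hkt
  have hkm' : (k : ℝ) < m + 1 ∧ (m : ℝ) < k + 1 := by constructor <;> linarith
  norm_cast at hkm'
  omega

theorem exists_contDiff_eventually_deriv_eq_comp {v : ℝ → ℝ} {s : Set ℝ} (hs : IsOpen s)
    (hr : 1 ≤ r) (hv : ContDiffOn ℝ r v s) {t₀ : ℝ} (ht₀ : t₀ ∈ s) :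
    ∃ f : ℝ → ℝ, ContDiff ℝ (r + 1) f ∧ support f ⊆ ball 0 (1 / 2) ∧ f 0 = t₀ ∧
      ∀ᶠ u in 𝓝 0, f u ∈ s ∧ deriv f u = v (f u) := by
  have hv₀ : ContDiffAt ℝ 1 v t₀ := (hv.contDiffAt (hs.mem_nhds ht₀)).of_le (mod_cast hr)
  obtain ⟨α, hα₀, ε, hε, hα⟩ :=
    hv₀.exists_forall_mem_closedBall_exists_eq_forall_mem_Ioo_hasDerivAt₀ 0
  have hαε : ∀ᶠ u in 𝓝 0, HasDerivAt α (v (α u)) u := by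
    filter_upwards [Ioo_mem_nhds (by linarith : 0 - ε < 0) (by linarith : 0 < 0 + ε)] using hα
  have hαs : ∀ᶠ u in 𝓝 0, α u ∈ s :=
    hαε.self_of_nhds.continuousAt.eventually_mem (hα₀ ▸ hs.mem_nhds ht₀)
  obtain ⟨I, hI, hIo, hI₀⟩ := _root_.eventually_nhds_iff.1
    ((hαε.and hαs).and (ball_mem_nhds (0 : ℝ) one_half_pos))
  obtain ⟨f, hf, hfI, hfα⟩ := exists_contDiff_support_subset_eventuallyEq
    (r := r + 1) (hIo.mem_nhds hI₀) (contDiffOn_add_one_of_hasDerivAt_comp hv hIo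
      (fun u hu => (hI u hu).1.2) fun u hu => (hI u hu).1.1)
  refine ⟨f, hf, hfI.trans fun u hu => (hI u hu).2, hfα.self_of_nhds.trans hα₀, ?_⟩
  filter_upwards [hfα.eventuallyEq_nhds, hαε, hαs] with u hu hαu hαus
  rw [hu.deriv_eq, hu.eq_of_nhds, hαu.deriv]
  exact ⟨hαus, rfl⟩

theorem exists_contDiff_image_mem_nhds_deriv_eq_comp {v : ℝ → ℝ} {s : Set ℝ} (hs : IsOpen s)
    (hr : 1 ≤ r) (hv : ContDiffOn ℝ r v s) {t₀ : ℝ} (ht₀ : t₀ ∈ s) (hv₀ : v t₀ ≠ 0) :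
    ∃ (f : ℝ → ℝ) (I : Set ℝ), ContDiff ℝ (r + 1) f ∧ support f ⊆ ball 0 (1 / 2) ∧ IsOpen I ∧
      I ⊆ ball 0 (1 / 2) ∧ f '' I ∈ 𝓝 t₀ ∧ ∀ u ∈ I, f u ∈ s ∧ deriv f u = v (f u) := by
  obtain ⟨f, hf, hfsupp, hf₀, hfv⟩ := exists_contDiff_eventually_deriv_eq_comp hs hr hv ht₀
  obtain ⟨I, hI, hIo, hI₀⟩ := _root_.eventually_nhds_iff.1
    (hfv.and (ball_mem_nhds (0 : ℝ) one_half_pos))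
  have hderiv : deriv f 0 ≠ 0 := by rwa [(hI 0 hI₀).1.2, hf₀]
  have hmap : map f (𝓝 0) = 𝓝 t₀ :=
    hf₀ ▸ (hf.contDiffAt.hasStrictDerivAt (by simp)).map_nhds_eq hderiv
  exact ⟨f, I, hf, hfsupp, hIo, fun u hu => (hI u hu).2,
    hmap ▸ image_mem_map (hIo.mem_nhds hI₀), fun u hu => (hI u hu).1⟩

theorem exists_contDiff_image_eq_deriv_eq_comp {v : ℝ → ℝ} {s : Set ℝ} (hs : IsOpen s)
    (hr : 1 ≤ r) (hv : ContDiffOn ℝ r v s) (hv₀ : ∀ t ∈ s, v t ≠ 0) :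
    ∃ (s' : Set ℝ) (φ : ℝ → ℝ), IsOpen s' ∧ ContDiff ℝ (r + 1) φ ∧ φ '' s' = s ∧
      ∀ t ∈ s', deriv φ t = v (φ t) := by
  rcases s.eq_empty_or_nonempty with rfl | hne
  · exact ⟨∅, id, isOpen_empty, contDiff_id, by simp, by simp⟩
  choose! f I hf hfsupp hIo hIball himage hfv using fun t (ht : t ∈ s) =>
    exists_contDiff_image_mem_nhds_deriv_eq_comp hs hr hv ht (hv₀ t ht)
  obtain ⟨D, hDs, hDcount, hcover⟩ := TopologicalSpace.countable_cover_nhdsWithin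
    fun t ht => mem_nhdsWithin_of_mem_nhds (himage t ht)
  have hDne : D.Nonempty := by
    obtain ⟨t, ht⟩ := hne
    obtain ⟨d, hd, -⟩ := mem_iUnion₂.1 (hcover ht)
    exact ⟨d, hd⟩
  obtain ⟨q, rfl⟩ := hDcount.exists_eq_range hDne
  have hq (m : ℕ) : q m ∈ s := hDs (mem_range_self m)
  obtain ⟨φ, hφ, hφf⟩ := exists_contDiff_eqOn_ball_natCast (r := r + 1)
    (fun m => hf (q m) (hq m)) fun m => hfsupp (q m) (hq m)
  refine ⟨interior {t | φ t ∈ s ∧ deriv φ t = v (φ t)}, φ, isOpen_interior, hφ,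
    Subset.antisymm (image_subset_iff.2 fun t ht => (interior_subset ht).1) fun y hy => ?_,
    fun t ht => (interior_subset ht).2⟩
  obtain ⟨-, ⟨m, rfl⟩, u, hu, rfl⟩ := mem_iUnion₂.1 (hcover hy)
  have hum : u + m ∈ ball (m : ℝ) (1 / 2) := by
    simpa [Real.dist_eq] using hIball (q m) (hq m) hu
  refine ⟨u + m, mem_interior_iff_mem_nhds.2 ?_, by simp [hφf m hum]⟩
  have hsub : ∀ᶠ t : ℝ in 𝓝 (u + m), t - m ∈ I (q m) :=
    (continuous_sub_right (m : ℝ)).continuousAt.eventually_mem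
      ((hIo (q m) (hq m)).mem_nhds (by rwa [add_sub_cancel_right]))
  filter_upwards [hsub,
    ((hφf m).eventuallyEq_of_mem (isOpen_ball.mem_nhds hum)).eventuallyEq_nhds] with t ht hφt
  rw [hφt.eq_of_nhds, hφt.deriv_eq, deriv_comp_sub_const]
  exact hfv (q m) (hq m) _ ht

end Reparametrization

section AffineConnection

variable {n : ℕ} {Γ : Fin n → Fin n → Fin n → (Fin n → ℝ) → ℝ} {x : ℝ → Fin n → ℝ} {s : Set ℝ}

/-- The covariant acceleration `∇_v v`, with components `aᵏ + Γᵢⱼᵏ(p) vⁱ vʲ`, of a curve passing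
through `p` with velocity `v` and coordinate acceleration `a`, for the connection with Christoffel
symbols `Γ i j k = Γᵢⱼᵏ`. -/
def covariantAcceleration (Γ : Fin n → Fin n → Fin n → (Fin n → ℝ) → ℝ) (p v a : Fin n → ℝ) :
    Fin n → ℝ :=
  fun k => a k + ∑ i, ∑ j, Γ i j k p * v i * v j

/-- The curve `x` is an affinely parametrized geodesic on `s` of the connection with Christoffel
symbols `Γ`; the derivatives are taken componentwise. -/
def IsAffineGeodesicOn (Γ : Fin n → Fin n → Fin n → (Fin n → ℝ) → ℝ) (x : ℝ → Fin n → ℝ)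
    (s : Set ℝ) : Prop :=
  ∀ t ∈ s, covariantAcceleration Γ (x t) (fun i => deriv (fun u => x u i) t)
    (fun i => deriv (fun w => deriv (fun u => x u i) w) t) = 0

theorem covariantAcceleration_reparam (p v a : Fin n → ℝ) (c c' : ℝ) :
    covariantAcceleration Γ p (c • v) (c' • v + c ^ 2 • a) =
      c ^ 2 • covariantAcceleration Γ p v a + c' • v := by
  have quadratic (k : Fin n) : ∑ i, ∑ j, Γ i j k p * (c * v i) * (c * v j) =
      c ^ 2 * ∑ i, ∑ j, Γ i j k p * v i * v j := by
    simp only [Finset.mul_sum]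
    exact Finset.sum_congr rfl fun i _ => Finset.sum_congr rfl fun j _ => by ring
  ext k
  simp only [covariantAcceleration, Pi.add_apply, Pi.smul_apply, smul_eq_mul, quadratic]
  ring

theorem covariantAcceleration_add_smul {Γ' : Fin n → Fin n → Fin n → (Fin n → ℝ) → ℝ}
    {p : Fin n → ℝ} {c : ℝ} {B : Fin n → Fin n → ℝ} {W : Fin n → ℝ}
    (hΓ : ∀ i j k, Γ' i j k p = Γ i j k p + c * B i j * W k) (v a : Fin n → ℝ) :
    covariantAcceleration Γ' p v a =
      covariantAcceleration Γ p v a + (c * ∑ i, ∑ j, B i j * v i * v j) • W := by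
  ext k
  simp only [covariantAcceleration, Pi.add_apply, Pi.smul_apply, smul_eq_mul, hΓ, add_assoc,
    Finset.mul_sum, Finset.sum_mul, ← Finset.sum_add_distrib]
  congr 1
  exact Finset.sum_congr rfl fun i _ => Finset.sum_congr rfl fun j _ => by ring

theorem isAffineGeodesicOn_comp {φ : ℝ → ℝ} {s' : Set ℝ} (hs' : IsOpen s')
    (hφ : ∀ t ∈ s', DifferentiableAt ℝ φ t) (hφ' : ∀ t ∈ s', DifferentiableAt ℝ (deriv φ) t)
    (hx : ∀ t ∈ s', DifferentiableAt ℝ x (φ t))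
    (hx' : ∀ t ∈ s', DifferentiableAt ℝ (deriv x) (φ t))
    (hgeo : ∀ t ∈ s', deriv φ t ^ 2 • covariantAcceleration Γ (x (φ t)) (deriv x (φ t))
      (deriv (deriv x) (φ t)) + deriv (deriv φ) t • deriv x (φ t) = 0) :
    IsAffineGeodesicOn Γ (x ∘ φ) s' := by
  intro t ht
  have velocity : ∀ u ∈ s', (fun i => deriv (fun w => (x ∘ φ) w i) u) =
      deriv φ u • deriv x (φ u) := fun u hu => funext fun i =>
    (hasDerivAt_pi.1 ((hx u hu).hasDerivAt.scomp u (hφ u hu).hasDerivAt) i).deriv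
  have velocity_near (i : Fin n) : (fun u => deriv (fun w => (x ∘ φ) w i) u) =ᶠ[𝓝 t]
      fun u => (deriv φ u • deriv x (φ u)) i := by
    filter_upwards [hs'.mem_nhds ht] with u hu using congrFun (velocity u hu) i
  have acceleration : (fun i => deriv (fun u => deriv (fun w => (x ∘ φ) w i) u) t) =
      deriv (deriv φ) t • deriv x (φ t) + deriv φ t ^ 2 • deriv (deriv x) (φ t) := by
    ext i
    have h := (hφ' t ht).hasDerivAt.fun_smul
      ((hx' t ht).hasDerivAt.scomp t (hφ t ht).hasDerivAt)
    rw [(velocity_near i).deriv_eq]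
    refine (hasDerivAt_pi.1 h i).deriv.trans ?_
    simp only [comp_apply, Pi.add_apply, Pi.smul_apply, smul_eq_mul]
    ring
  rw [velocity t ht, acceleration, comp_apply, covariantAcceleration_reparam]
  exact hgeo t ht

theorem exists_isAffineGeodesicOn_comp {r : ℕ∞} (hr : 1 ≤ r) (hs : IsOpen s)
    (hx : ∀ t ∈ s, DifferentiableAt ℝ x t) (hx' : ∀ t ∈ s, DifferentiableAt ℝ (deriv x) t)
    {L : ℝ → ℝ} (hL : ContDiffOn ℝ r L s)
    (hpre : ∀ t ∈ s, covariantAcceleration Γ (x t) (deriv x t) (deriv (deriv x) t) =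
      deriv L t • deriv x t) :
    ∃ (s' : Set ℝ) (φ : ℝ → ℝ), IsOpen s' ∧ ContDiff ℝ (r + 1) φ ∧
      (∀ t ∈ s', 0 < deriv φ t) ∧ φ '' s' = s ∧ IsAffineGeodesicOn Γ (x ∘ φ) s' := by
  obtain ⟨s', φ, hs', hφ, himage, hφL⟩ := exists_contDiff_image_eq_deriv_eq_comp hs hr
    hL.neg.exp fun t _ => (Real.exp_pos _).ne'
  have hφs : ∀ t ∈ s', φ t ∈ s := fun t ht => himage ▸ mem_image_of_mem φ ht
  have hφ₁ : Differentiable ℝ φ := hφ.differentiable (by simp)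
  have hφ₂ : ∀ t ∈ s', HasDerivAt (deriv φ) (-deriv L (φ t) * deriv φ t ^ 2) t := fun t ht => by
    have hLt : HasDerivAt L (deriv L (φ t)) (φ t) :=
      ((hL.contDiffAt (hs.mem_nhds (hφs t ht))).differentiableAt
        (mod_cast (zero_lt_one.trans_le hr).ne')).hasDerivAt
    have hnear : deriv φ =ᶠ[𝓝 t] fun u => Real.exp (-L (φ u)) := by
      filter_upwards [hs'.mem_nhds ht] with u hu using hφL u hu
    refine ((hLt.comp t (hφ₁ t).hasDerivAt).neg.exp.congr_of_eventuallyEq hnear).congr_deriv ?_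
    rw [hφL t ht, Pi.neg_apply, comp_apply]
    ring
  refine ⟨s', φ, hs', hφ, fun t ht => hφL t ht ▸ Real.exp_pos _, himage,
    isAffineGeodesicOn_comp hs' (fun t _ => hφ₁ t) (fun t ht => (hφ₂ t ht).differentiableAt)
      (fun t ht => hx _ (hφs t ht)) (fun t ht => hx' _ (hφs t ht)) fun t ht => ?_⟩
  rw [hpre _ (hφs t ht), (hφ₂ t ht).deriv, smul_smul, ← add_smul]
  simp [mul_comm]

end AffineConnection

section Kropina

variable {n : ℕ} {g ginv : Fin n → Fin n → (Fin n → ℝ) → ℝ} {ω : Fin n → (Fin n → ℝ) → ℝ}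
  {p : Fin n → ℝ} {x : ℝ → Fin n → ℝ} {s : Set ℝ} {t : ℝ} {a : Fin n → ℝ}

/-- The matrix at the point `p` of a tensor field with two indices. -/
def tensorMatrix (g : Fin n → Fin n → (Fin n → ℝ) → ℝ) (p : Fin n → ℝ) :
    Matrix (Fin n) (Fin n) ℝ :=
  Matrix.of fun i j => g i j p

/-- The Euler–Lagrange expression `d/dt (∂E/∂ξᵏ) - ∂E/∂xᵏ` of the kinetic energy `E = ½ g(ξ, ξ)`,
for a curve passing through `p` with velocity `v` and coordinate acceleration `a`. -/
noncomputable def energyEulerLagrange (g : Fin n → Fin n → (Fin n → ℝ) → ℝ)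
    (p v a : Fin n → ℝ) : Fin n → ℝ :=
  fun k => ∑ j, (fderiv ℝ (g k j) p v * v j + g k j p * a j)
    - 1 / 2 * ∑ i, ∑ j, pd (g i j) p k * v i * v j

/-- The components `∇ᵢωⱼ = ∂ᵢωⱼ - Γᵢⱼˡ ωₗ` of the covariant derivative of the 1-form `ω`. -/
noncomputable def covariantDerivForm (Γ : Fin n → Fin n → Fin n → (Fin n → ℝ) → ℝ)
    (ω : Fin n → (Fin n → ℝ) → ℝ) (p : Fin n → ℝ) (i j : Fin n) : ℝ :=
  pd (ω j) p i - ∑ l, Γ i j l p * ω l p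

/-- The connection `(Γ^g)ᵢⱼᵏ + |ω|⁻² (∇^g_i ωⱼ) ωᵏ` attached to a Kropina metric `g / ω`; the
matrix `ginv` is the inverse of `g`. -/
noncomputable def kropinaConnection (g ginv : Fin n → Fin n → (Fin n → ℝ) → ℝ)
    (ω : Fin n → (Fin n → ℝ) → ℝ) (i j k : Fin n) (p : Fin n → ℝ) : ℝ :=
  Christoffel g ginv i j k p
    + (∑ a, ∑ b, ginv a b p * ω a p * ω b p)⁻¹ * covariantDerivForm (Christoffel g ginv) ω p i j
      * (∑ l, ginv k l p * ω l p)

theorem fderiv_apply_eq_sum_pd (f : (Fin n → ℝ) → ℝ) (p v : Fin n → ℝ) :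
    fderiv ℝ f p v = ∑ m, pd f p m * v m := by
  conv_lhs => rw [pi_eq_sum_univ' v, map_sum]
  exact Finset.sum_congr rfl fun m _ => by rw [map_smul, smul_eq_mul, mul_comm, pd]

theorem dotProduct_tensorMatrix_mulVec (p v w : Fin n → ℝ) :
    v ⬝ᵥ tensorMatrix g p *ᵥ w = ∑ i, ∑ j, g i j p * v i * w j := by
  simp only [dotProduct, Matrix.mulVec, tensorMatrix, Matrix.of_apply, Finset.mul_sum]
  exact Finset.sum_congr rfl fun i _ => Finset.sum_congr rfl fun j _ => by ring

theorem sum_sum_christoffelFirstKind (hg : ∀ i j, g i j = g j i) (p v : Fin n → ℝ) (l : Fin n) :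
    ∑ i, ∑ j, (pd (g j l) p i + pd (g i l) p j - pd (g i j) p l) * v i * v j =
      2 * ∑ j, fderiv ℝ (g l j) p v * v j - ∑ i, ∑ j, pd (g i j) p l * v i * v j := by
  have first : ∑ i, ∑ j, pd (g j l) p i * v i * v j = ∑ j, fderiv ℝ (g l j) p v * v j := by
    simp only [fderiv_apply_eq_sum_pd, Finset.sum_mul, hg l]
    exact Finset.sum_comm
  have second : ∑ i, ∑ j, pd (g i l) p j * v i * v j = ∑ j, fderiv ℝ (g l j) p v * v j := by
    rw [← first, Finset.sum_comm]
    exact Finset.sum_congr rfl fun i _ => Finset.sum_congr rfl fun j _ => by ring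
  simp only [sub_mul, add_mul, Finset.sum_sub_distrib, Finset.sum_add_distrib, first, second]
  ring

theorem sum_sum_christoffel (hg : ∀ i j, g i j = g j i) (p v : Fin n → ℝ) :
    (fun k => ∑ i, ∑ j, Christoffel g ginv i j k p * v i * v j) =
      tensorMatrix ginv p *ᵥ energyEulerLagrange g p v 0 := by
  ext k
  calc ∑ i, ∑ j, Christoffel g ginv i j k p * v i * v j
      = ∑ l, ginv k l p * (1 / 2 *
          ∑ i, ∑ j, (pd (g j l) p i + pd (g i l) p j - pd (g i j) p l) * v i * v j) := by
        simp only [Christoffel, Finset.mul_sum, Finset.sum_mul]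
        rw [Finset.sum_comm_cycle]
        exact Finset.sum_congr rfl fun l _ => Finset.sum_congr rfl fun i _ =>
          Finset.sum_congr rfl fun j _ => by ring
    _ = ∑ l, ginv k l p * energyEulerLagrange g p v 0 l := by
        refine Finset.sum_congr rfl fun l _ => ?_
        simp only [sum_sum_christoffelFirstKind hg, energyEulerLagrange, Pi.zero_apply, mul_zero,
          add_zero]
        ring

theorem covariantAcceleration_christoffel (hg : ∀ i j, g i j = g j i)
    (hinv : tensorMatrix ginv p * tensorMatrix g p = 1) (v a : Fin n → ℝ) :
    covariantAcceleration (Christoffel g ginv) p v a =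
      tensorMatrix ginv p *ᵥ energyEulerLagrange g p v a := by
  have hsplit : energyEulerLagrange g p v a =
      tensorMatrix g p *ᵥ a + energyEulerLagrange g p v 0 := by
    ext k
    simp only [energyEulerLagrange, Matrix.mulVec, dotProduct, tensorMatrix, Matrix.of_apply,
      Pi.add_apply, Pi.zero_apply, mul_zero, add_zero, Finset.sum_add_distrib]
    ring
  rw [hsplit, Matrix.mulVec_add, Matrix.mulVec_mulVec, hinv, Matrix.one_mulVec,
    ← sum_sum_christoffel hg]
  rfl

theorem hasDerivAt_Fden_comp (Γ : Fin n → Fin n → Fin n → (Fin n → ℝ) → ℝ)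
    (hω : ∀ i, DifferentiableAt ℝ (ω i) (x t)) (hx : DifferentiableAt ℝ x t)
    (hx' : HasDerivAt (deriv x) a t) :
    HasDerivAt (fun u => Fden ω (x u) (deriv x u))
      (∑ i, ∑ j, covariantDerivForm Γ ω (x t) i j * deriv x t i * deriv x t j
        + (ω · (x t)) ⬝ᵥ covariantAcceleration Γ (x t) (deriv x t) a) t := by
  have product_rule : HasDerivAt (fun u => Fden ω (x u) (deriv x u))
      (∑ l, (fderiv ℝ (ω l) (x t) (deriv x t) * deriv x t l + ω l (x t) * a l)) t :=
    HasDerivAt.fun_sum fun l _ =>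
      ((hω l).hasFDerivAt.comp_hasDerivAt t hx.hasDerivAt).mul (hasDerivAt_pi.1 hx' l)
  refine product_rule.congr_deriv ?_
  set v := deriv x t
  have connection_terms : ∑ l, ω l (x t) * ∑ i, ∑ j, Γ i j l (x t) * v i * v j =
      ∑ i, ∑ j, (∑ l, Γ i j l (x t) * ω l (x t)) * v i * v j := by
    simp only [Finset.mul_sum, Finset.sum_mul]
    rw [← Finset.sum_comm_cycle]
    exact Finset.sum_congr rfl fun i _ => Finset.sum_congr rfl fun j _ =>
      Finset.sum_congr rfl fun l _ => by ring
  have derivative_terms : ∑ l, fderiv ℝ (ω l) (x t) v * v l =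
      ∑ i, ∑ j, pd (ω j) (x t) i * v i * v j := by
    simp only [fderiv_apply_eq_sum_pd, Finset.sum_mul]
    exact Finset.sum_comm
  simp only [covariantDerivForm, covariantAcceleration, dotProduct, mul_add, sub_mul,
    Finset.sum_add_distrib, Finset.sum_sub_distrib, connection_terms, derivative_terms]
  ring

theorem IsKropinaGeodesicOn.exists_energyEulerLagrange_eq (hgeo : IsKropinaGeodesicOn g ω x s)
    (ht : t ∈ s) (hg : ∀ i j, DifferentiableAt ℝ (g i j) (x t))
    (hω : ∀ i, DifferentiableAt ℝ (ω i) (x t))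
    (hclosed : ∀ i j, pd (ω j) (x t) i = pd (ω i) (x t) j) (hx : DifferentiableAt ℝ x t)
    (hx' : HasDerivAt (deriv x) a t) :
    ∃ μ : ℝ, energyEulerLagrange g (x t) (deriv x t) a =
      (deriv (fun u => Fden ω (x u) (deriv x u)) t / Fden ω (x t) (deriv x t)) •
        tensorMatrix g (x t) *ᵥ deriv x t + μ • (ω · (x t)) := by
  obtain ⟨hne, hEL⟩ := hgeo t ht
  have hcomp {f : (Fin n → ℝ) → ℝ} (hf : DifferentiableAt ℝ f (x t)) :
      HasDerivAt (fun u => f (x u)) (fderiv ℝ f (x t) (deriv x t)) t :=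
    hf.hasFDerivAt.comp_hasDerivAt t hx.hasDerivAt
  have hx'i := hasDerivAt_pi.1 hx'
  have hden := (hasDerivAt_Fden_comp 0 hω hx hx').differentiableAt.hasDerivAt
  have hnum : DifferentiableAt ℝ (fun u => Fnum g (x u) (deriv x u)) t :=
    DifferentiableAt.fun_sum fun i _ => DifferentiableAt.fun_sum fun j _ =>
      (((hcomp (hg i j)).mul (hx'i i)).mul (hx'i j)).differentiableAt
  have hmomentum (k : Fin n) := HasDerivAt.fun_sum fun j (_ : j ∈ Finset.univ) =>
    (hcomp (hg k j)).fun_mul (hx'i j)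
  have hρ := ((hden.fun_inv hne).differentiableAt.fun_pow 2 |>.fun_mul hnum).hasDerivAt
  set h := Fden ω (x t) (deriv x t) with hh
  set h' := deriv (fun u => Fden ω (x u) (deriv x u)) t
  set ρ' := deriv (fun u => (Fden ω (x u) (deriv x u))⁻¹ ^ 2 * Fnum g (x u) (deriv x u)) t
  -- With `ρ = g(γ', γ') / h²`, closedness makes the terms `ρ (ωₖ)'` and `ρ ∂ₖωₗ γ'ˡ` of the
  -- `k`-th equation cancel; what is left is multiplied by `h / 2`.
  refine ⟨h / 2 * ρ', funext fun k => ?_⟩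
  have hFxi := (((hden.fun_inv hne).const_mul 2).fun_mul (hmomentum k)).fun_sub
    (hρ.fun_mul (hcomp (hω k)))
  have hEL_k := hFxi.unique ((hEL k).congr_of_eventuallyEq (Eventually.of_forall fun u => by
    simp only [Fxi]; ring))
  have hclosed_k : ∑ l, pd (ω l) (x t) k * deriv x t l = fderiv ℝ (ω k) (x t) (deriv x t) := by
    simp only [fderiv_apply_eq_sum_pd, hclosed k]
  simp only [Fx, hclosed_k, ← hh] at hEL_k
  simp only [energyEulerLagrange, Pi.add_apply, Pi.smul_apply, smul_eq_mul, Matrix.mulVec,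
    dotProduct, tensorMatrix, Matrix.of_apply]
  field_simp at hEL_k ⊢
  linarith

theorem IsKropinaGeodesicOn.covariantAcceleration_kropinaConnection
    (hgeo : IsKropinaGeodesicOn g ω x s) (ht : t ∈ s) (hgsymm : ∀ i j, g i j = g j i)
    (hinv : tensorMatrix ginv (x t) * tensorMatrix g (x t) = 1)
    (hg : ∀ i j, DifferentiableAt ℝ (g i j) (x t)) (hω : ∀ i, DifferentiableAt ℝ (ω i) (x t))
    (hclosed : ∀ i j, pd (ω j) (x t) i = pd (ω i) (x t) j)
    (hnorm : ∑ k, ∑ l, ginv k l (x t) * ω k (x t) * ω l (x t) ≠ 0)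
    (hx : DifferentiableAt ℝ x t) (hx' : HasDerivAt (deriv x) a t) :
    covariantAcceleration (kropinaConnection g ginv ω) (x t) (deriv x t) a =
      deriv (fun u => Real.log (Fden ω (x u) (deriv x u))) t • deriv x t := by
  have hne := (hgeo t ht).1
  obtain ⟨μ, hμ⟩ := hgeo.exists_energyEulerLagrange_eq ht hg hω hclosed hx hx'
  have hden := hasDerivAt_Fden_comp (Christoffel g ginv) hω hx hx'
  have hdlog := hden.log hne
  rw [hden.deriv] at hμ
  set v := deriv x t
  set w : Fin n → ℝ := (ω · (x t))
  set W := tensorMatrix ginv (x t) *ᵥ w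
  set N := ∑ k, ∑ l, ginv k l (x t) * ω k (x t) * ω l (x t)
  set A := covariantAcceleration (Christoffel g ginv) (x t) v a
  set B := ∑ i, ∑ j, covariantDerivForm (Christoffel g ginv) ω (x t) i j * v i * v j
  have hA : A = ((B + w ⬝ᵥ A) / Fden ω (x t) v) • v + μ • W := by
    conv_lhs => rw [show A = _ from covariantAcceleration_christoffel hgsymm hinv v a, hμ]
    rw [Matrix.mulVec_add, Matrix.mulVec_smul, Matrix.mulVec_smul, Matrix.mulVec_mulVec, hinv,
      Matrix.one_mulVec]
  have hwA : w ⬝ᵥ A = (B + w ⬝ᵥ A) + μ * N := by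
    conv_lhs => rw [hA]
    rw [dotProduct_add, dotProduct_smul, dotProduct_smul, smul_eq_mul, smul_eq_mul,
      dotProduct_tensorMatrix_mulVec, show w ⬝ᵥ v = Fden ω (x t) v from rfl, div_mul_cancel₀ _ hne]
  have hB : N⁻¹ * B = -μ := by
    field_simp
    linarith
  rw [covariantAcceleration_add_smul (Γ := Christoffel g ginv) (c := N⁻¹) (W := W)
    (fun i j k => rfl) v a, hB, hdlog.deriv]
  conv_lhs => rw [show covariantAcceleration _ _ _ _ = _ from hA]
  rw [neg_smul, add_neg_cancel_right]

theorem stmt7_general {r : ℕ∞} (hr : 1 ≤ r) (hs : IsOpen s) (hgsymm : ∀ i j, g i j = g j i)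
    (hginv : ∀ t ∈ s, ∀ i j,
      (∑ l, g i l (x t) * ginv l j (x t)) = if i = j then (1 : ℝ) else 0)
    (hg : ∀ t ∈ s, ∀ i j, DifferentiableAt ℝ (g i j) (x t))
    (hω : ∀ t ∈ s, ∀ i, ContDiffAt ℝ r (ω i) (x t))
    (hclosed : ∀ t ∈ s, ∀ i j, pd (ω j) (x t) i = pd (ω i) (x t) j)
    (hnorm : ∀ t ∈ s, ∑ k, ∑ l, ginv k l (x t) * ω k (x t) * ω l (x t) ≠ 0)
    (hx : ContDiffOn ℝ (r + 1) x s) (hgeo : IsKropinaGeodesicOn g ω x s) :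
    ∃ (s' : Set ℝ) (φ : ℝ → ℝ), IsOpen s' ∧ ContDiff ℝ (r + 1) φ ∧
      (∀ t ∈ s', 0 < deriv φ t) ∧ φ '' s' = s ∧
      IsAffineGeodesicOn (kropinaConnection g ginv ω) (x ∘ φ) s' := by
  have hr₀ : (r : WithTop ℕ∞) ≠ 0 := mod_cast (zero_lt_one.trans_le hr).ne'
  have hx' : ContDiffOn ℝ r (deriv x) s := hx.deriv_of_isOpen hs le_rfl
  have hx₁ : ∀ t ∈ s, DifferentiableAt ℝ x t := fun t ht =>
    (hx.contDiffAt (hs.mem_nhds ht)).differentiableAt (by simp)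
  have hx₂ : ∀ t ∈ s, DifferentiableAt ℝ (deriv x) t := fun t ht =>
    (hx'.contDiffAt (hs.mem_nhds ht)).differentiableAt hr₀
  have hden : ContDiffOn ℝ r (fun u => Fden ω (x u) (deriv x u)) s :=
    ContDiffOn.sum fun l _ => ContDiffOn.mul
      (fun t ht => (hω t ht l).comp_contDiffWithinAt t (hx.of_le le_self_add t ht))
      (contDiffOn_pi.1 hx' l)
  refine exists_isAffineGeodesicOn_comp hr hs hx₁ hx₂ (hden.log fun t ht => (hgeo t ht).1)
    fun t ht => ?_
  have hinv : tensorMatrix g (x t) * tensorMatrix ginv (x t) = 1 := Matrix.ext fun i j => by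
    rw [Matrix.one_apply]
    exact hginv t ht i j
  exact hgeo.covariantAcceleration_kropinaConnection ht hgsymm (mul_eq_one_comm.1 hinv) (hg t ht)
    (fun i => (hω t ht i).differentiableAt hr₀) (hclosed t ht) (hnorm t ht) (hx₁ t ht)
    (hx₂ t ht).hasDerivAt

end Kropina

/-- If `ω` is closed, every geodesic of the Kropina metric `F = g/ω` is, up to an
orientation-preserving reparametrization, a geodesic of the affine connection
`Γ_{ij}^k = (Γ^g)_{ij}^k + |ω|_g⁻²(∇^g_i ω_j)ω^k`. -/
theorem stmt7 {n : ℕ}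
    (g ginv : Fin n → Fin n → (Fin n → ℝ) → ℝ) (ω : Fin n → (Fin n → ℝ) → ℝ)
    (hgsymm : ∀ i j, g i j = g j i)
    (hginv : ∀ p i j, (∑ l, g i l p * ginv l j p) = if i = j then (1 : ℝ) else 0)
    (hgsm : ∀ i j, ContDiff ℝ (⊤ : ℕ∞) (g i j)) (hωsm : ∀ i, ContDiff ℝ (⊤ : ℕ∞) (ω i))
    (hclosed : ∀ p i j, pd (ω j) p i = pd (ω i) p j)
    (hnorm : ∀ p, (∑ k, ∑ l, ginv k l p * ω k p * ω l p) ≠ 0)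
    (Γ : Fin n → Fin n → Fin n → (Fin n → ℝ) → ℝ)
    (hΓ : ∀ i j k p, Γ i j k p = Christoffel g ginv i j k p
      + (∑ a, ∑ b, ginv a b p * ω a p * ω b p)⁻¹
        * (pd (ω j) p i - ∑ l, Christoffel g ginv i j l p * ω l p)
        * (∑ l, ginv k l p * ω l p))
    (γ : ℝ → Fin n → ℝ) (s : Set ℝ) (hs : IsOpen s) (hγ : ContDiffOn ℝ (⊤ : ℕ∞) γ s)
    (hgeo : IsKropinaGeodesicOn g ω γ s) :
    ∃ (s' : Set ℝ) (φ : ℝ → ℝ), IsOpen s' ∧ ContDiff ℝ (⊤ : ℕ∞) φ ∧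
      (∀ t ∈ s', 0 < deriv φ t) ∧ φ '' s' = s ∧
      ∀ t ∈ s', ∀ k,
        deriv (fun u => deriv (fun v => γ (φ v) k) u) t
          + ∑ i, ∑ j, Γ i j k (γ (φ t))
              * deriv (fun v => γ (φ v) i) t * deriv (fun v => γ (φ v) j) t = 0 := by
  obtain rfl : Γ = kropinaConnection g ginv ω := by
    ext i j k p
    exact hΓ i j k p
  obtain ⟨s', φ, hs', hφ, hφ', himage, haffine⟩ := stmt7_general (r := ⊤) le_top hs hgsymm
    (fun t _ => hginv (γ t)) (fun t _ i j => (hgsm i j).differentiable (by simp) _)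
    (fun t _ i => (hωsm i).contDiffAt) (fun t _ => hclosed (γ t)) (fun t _ => hnorm (γ t)) hγ hgeo
  exact ⟨s', φ, hs', hφ, hφ', himage, fun t ht k => congrFun (haffine t ht) k⟩
end

section
/- Let F = g/ω be a Kropina metric on M with g non-degenerate on ker ω. For any point p ∈ M and any ξ ∈ T_pM with ω(ξ) ≠ 0, there exists a unique (up to reparametrization/locally unique in parametrized form with fixed initial data) geodesic γ of F with γ(0) = p and γ'(0) = ξ. -/
open scoped BigOperators

/-!
Since `F` is positively homogeneous of degree one in the velocity, its fibre Hessian `F_vv` kills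
the velocity, and the Euler–Lagrange equations determine the acceleration only up to
reparametrization. The parametrization is fixed by requiring `ω(γ')`, rather than `F` itself, which
may vanish, to be constant. The corrected Hessian `F_vv + ω ⊗ ω` is invertible: on `ker ω` the form
`F_vv` is `(2/ω(v)) g`, nondegenerate by hypothesis, and pairing with `v` gives `ω ⊗ ω` alone. The
corrected equation is therefore a smooth second-order ODE. By Euler's identity the Euler–Lagrange
equations paired with the velocity hold trivially, so the same pairing of the corrected equation
forces `ω(γ')` to be constant and its solutions are geodesics. Conversely any geodesic, run at the
speed that makes `ω(γ')` constant, solves it, and Picard–Lindelöf gives uniqueness.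
-/

section AutonomousODE

open Set Filter
open scoped Topology ContDiff

variable {E : Type*} [NormedAddCommGroup E] [NormedSpace ℝ E]

lemma exists_contDiffOn_integralCurve [CompleteSpace E] {f : E → E} {U : Set E} {k : ℕ∞}
    (hk : 1 ≤ k) (hU : IsOpen U) (hf : ContDiffOn ℝ k f U) {z : E} (hz : z ∈ U) (t₀ : ℝ) :
    ∃ α : ℝ → E, α t₀ = z ∧ ∃ ε > 0, ContDiffOn ℝ k α (Ioo (t₀ - ε) (t₀ + ε)) ∧
      ∀ t ∈ Ioo (t₀ - ε) (t₀ + ε), α t ∈ U ∧ HasDerivAt α (f (α t)) t := by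
  have hfz : ContDiffAt ℝ 1 f z := (hf.contDiffAt (hU.mem_nhds hz)).of_le (mod_cast hk)
  obtain ⟨α, hα₀, r, hr, hα⟩ :=
    hfz.exists_forall_mem_closedBall_exists_eq_forall_mem_Ioo_hasDerivAt₀ t₀
  have hmem : ∀ᶠ t in 𝓝 t₀, α t ∈ U ∧ HasDerivAt α (f (α t)) t := by
    have ht₀ : Ioo (t₀ - r) (t₀ + r) ∈ 𝓝 t₀ := Ioo_mem_nhds (by linarith) (by linarith)
    have hαU : ∀ᶠ t in 𝓝 t₀, α t ∈ U :=
      (hα t₀ (mem_of_mem_nhds ht₀)).continuousAt.eventually (hU.mem_nhds (hα₀ ▸ hz))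
    filter_upwards [hαU, ht₀] with t htU ht using ⟨htU, hα t ht⟩
  obtain ⟨ε, hε, hball⟩ := Metric.nhds_basis_closedBall.eventually_iff.1 hmem
  rw [Real.closedBall_eq_Icc] at hball
  refine ⟨α, hα₀, ε, hε, ?_, fun t ht => hball (Ioo_subset_Icc_self ht)⟩
  exact (ODE.contDiffOn_enat_Icc_of_hasDerivWithinAt (f := fun _ => f)
    (hf.comp contDiff_snd.contDiffOn fun _ h => h.2)
    (fun t ht => (hball ht).2.hasDerivWithinAt) fun t ht => (hball ht).1).mono Ioo_subset_Icc_self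

lemma exists_hasDerivAt_of_continuousOn [CompleteSpace E] {f : ℝ → E} {s : Set ℝ}
    (hs : IsOpen s) (hc : s.OrdConnected) (hf : ContinuousOn f s) {t₀ : ℝ} (ht₀ : t₀ ∈ s) :
    ∃ F : ℝ → E, F t₀ = 0 ∧ ∀ t ∈ s, HasDerivAt F (f t) t :=
  ⟨fun t => ∫ u in t₀..t, f u, intervalIntegral.integral_same, fun t ht =>
    intervalIntegral.integral_hasDerivAt_right
      (hf.mono (hc.uIcc_subset ht₀ ht)).intervalIntegrable
      (hf.stronglyMeasurableAtFilter hs t ht) (hf.continuousAt (hs.mem_nhds ht))⟩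

lemma eventuallyEq_comp_of_hasDerivAt_smul {f : E → E} {α β : ℝ → E} {φ μ : ℝ → ℝ} {t₀ : ℝ}
    (hf : ContDiffAt ℝ 1 f (β t₀)) (hα : ∀ᶠ s in 𝓝 (φ t₀), HasDerivAt α (f (α s)) s)
    (hβ : ∀ᶠ t in 𝓝 t₀, HasDerivAt β (μ t • f (β t)) t)
    (hφ : ∀ᶠ t in 𝓝 t₀, HasDerivAt φ (μ t) t) (hμ : ContinuousAt μ t₀)
    (h₀ : β t₀ = α (φ t₀)) : β =ᶠ[𝓝 t₀] α ∘ φ := by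
  obtain ⟨K, s, hs, hLip⟩ := hf.exists_lipschitzOnWith
  have hφc : ContinuousAt φ t₀ := hφ.self_of_nhds.continuousAt
  have hαφ : ∀ᶠ t in 𝓝 t₀, HasDerivAt (α ∘ φ) (μ t • f (α (φ t))) t := by
    filter_upwards [hφc.eventually hα, hφ] with t hαt hφt using hαt.scomp t hφt
  obtain ⟨M, hM⟩ : ∃ M, ∀ᶠ t in 𝓝 t₀, ‖μ t‖₊ < M :=
    (exists_gt ‖μ t₀‖₊).imp fun M hM => hμ.nnnorm.eventually_lt_const hM
  refine ODE_solution_unique_of_eventually (v := fun t z => μ t • f z) (s := fun _ => s)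
    (K := M * K) ?_ ?_ ?_ h₀
  · filter_upwards [hM] with t ht
    exact ((lipschitzWith_smul (μ t)).comp_lipschitzOnWith hLip).weaken (by gcongr)
  · exact hβ.and (hβ.self_of_nhds.continuousAt.eventually hs)
  · exact hαφ.and (hαφ.self_of_nhds.continuousAt.eventually
      (by rwa [Function.comp_apply, ← h₀]))

end AutonomousODE

section ConicLagrangian

open Set Filter
open scoped Topology ContDiff

variable {E : Type*} [NormedAddCommGroup E] [NormedSpace ℝ E]

/-- The position derivative `L_x (x, v)` of a Lagrangian `L (x, v)`. -/
noncomputable def posDeriv (L : E × E → ℝ) (z : E × E) : E →L[ℝ] ℝ :=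
  fderiv ℝ L z ∘L .inl ℝ E E

/-- The velocity derivative (momentum) `L_v (x, v)` of a Lagrangian `L (x, v)`. -/
noncomputable def velDeriv (L : E × E → ℝ) (z : E × E) : E →L[ℝ] ℝ :=
  fderiv ℝ L z ∘L .inr ℝ E E

/-- A conic Finsler-type Lagrangian: smooth and positively homogeneous of degree one in the
velocity on an open set `U` of pairs `(x, v)` which is a union of open rays in the fibres.
Neither positivity of `L` nor convexity is required. -/
structure IsConicLagrangian (L : E × E → ℝ) (U : Set (E × E)) : Prop where
  isOpen : IsOpen U
  smul_mem : ∀ z ∈ U, ∀ c : ℝ, 0 < c → (z.1, c • z.2) ∈ U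
  contDiffOn : ContDiffOn ℝ ∞ L U
  map_smul : ∀ z ∈ U, ∀ c : ℝ, 0 < c → L (z.1, c • z.2) = c * L z

lemma fderiv_eq_posDeriv_add_velDeriv (L : E × E → ℝ) (z y : E × E) :
    fderiv ℝ L z y = posDeriv L z y.1 + velDeriv L z y.2 := by
  simp [posDeriv, velDeriv, ← map_add]

namespace IsConicLagrangian

variable {L : E × E → ℝ} {U : Set (E × E)} {z : E × E}

lemma contDiffOn_fderiv (hL : IsConicLagrangian L U) : ContDiffOn ℝ ∞ (fderiv ℝ L) U :=
  hL.contDiffOn.fderiv_of_isOpen hL.isOpen le_rfl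

lemma contDiffOn_posDeriv (hL : IsConicLagrangian L U) : ContDiffOn ℝ ∞ (posDeriv L) U :=
  hL.contDiffOn_fderiv.clm_comp contDiffOn_const

lemma contDiffOn_velDeriv (hL : IsConicLagrangian L U) : ContDiffOn ℝ ∞ (velDeriv L) U :=
  hL.contDiffOn_fderiv.clm_comp contDiffOn_const

lemma hasFDerivAt (hL : IsConicLagrangian L U) (hz : z ∈ U) :
    HasFDerivAt L (fderiv ℝ L z) z :=
  ((hL.contDiffOn.contDiffAt (hL.isOpen.mem_nhds hz)).differentiableAt (by simp)).hasFDerivAt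

lemma hasFDerivAt_velDeriv (hL : IsConicLagrangian L U) (hz : z ∈ U) :
    HasFDerivAt (velDeriv L) (fderiv ℝ (velDeriv L) z) z :=
  ((hL.contDiffOn_velDeriv.contDiffAt (hL.isOpen.mem_nhds hz)).differentiableAt
    (by simp)).hasFDerivAt

lemma hasDerivAt_velDeriv_line (hL : IsConicLagrangian L U) (hz : z ∈ U) (w u : E) :
    HasDerivAt (fun s : ℝ => velDeriv L (z.1, z.2 + s • w) u)
      (fderiv ℝ (velDeriv L) z (0, w) u) 0 := by
  have hline : HasDerivAt (fun s : ℝ => (z.1, z.2 + s • w)) (0, w) 0 := by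
    simpa using (hasDerivAt_const (0 : ℝ) z.1).prodMk
      (((hasDerivAt_id (0 : ℝ)).smul_const w).const_add z.2)
  have hz₀ : (z.1, z.2 + (0 : ℝ) • w) = z := by simp
  have hmomentum : HasFDerivAt (velDeriv L) (fderiv ℝ (velDeriv L) z) (z.1, z.2 + (0 : ℝ) • w) := by
    rw [hz₀]
    exact hL.hasFDerivAt_velDeriv hz
  exact (ContinuousLinearMap.apply ℝ ℝ u).hasFDerivAt.comp_hasDerivAt 0
    (hmomentum.comp_hasDerivAt 0 hline)

lemma fderiv_smul (hL : IsConicLagrangian L U) (hz : z ∈ U) {c : ℝ} (hc : 0 < c) (X w : E) :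
    fderiv ℝ L (z.1, c • z.2) (X, c • w) = c * fderiv ℝ L z (X, w) := by
  have hscale : HasFDerivAt (fun y : E × E => (y.1, c • y.2))
      ((ContinuousLinearMap.fst ℝ E E).prod (c • .snd ℝ E E)) z :=
    hasFDerivAt_fst.prodMk (hasFDerivAt_snd.const_smul c)
  have hcomp := (hL.hasFDerivAt (hL.smul_mem z hz c hc)).comp z hscale
  have hmul : HasFDerivAt (fun y : E × E => L (y.1, c • y.2)) (c • fderiv ℝ L z) z :=
    ((hL.hasFDerivAt hz).const_mul c).congr_of_eventuallyEq <| by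
      filter_upwards [hL.isOpen.mem_nhds hz] with y hy using hL.map_smul y hy c hc
  simpa using congr($(hcomp.unique hmul) (X, w))

lemma posDeriv_smul (hL : IsConicLagrangian L U) (hz : z ∈ U) {c : ℝ} (hc : 0 < c) :
    posDeriv L (z.1, c • z.2) = c • posDeriv L z := by
  ext X
  simpa [posDeriv] using hL.fderiv_smul hz hc X 0

lemma velDeriv_smul (hL : IsConicLagrangian L U) (hz : z ∈ U) {c : ℝ} (hc : 0 < c) :
    velDeriv L (z.1, c • z.2) = velDeriv L z := by
  ext w
  have h : velDeriv L (z.1, c • z.2) (c • w) = c * velDeriv L z w := hL.fderiv_smul hz hc 0 w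
  simpa [hc.ne'] using h

lemma velDeriv_apply_self (hL : IsConicLagrangian L U) (hz : z ∈ U) :
    velDeriv L z z.2 = L z := by
  have hray : HasDerivAt (fun c : ℝ => (z.1, c • z.2)) (0, z.2) 1 := by
    simpa using (hasDerivAt_const 1 z.1).prodMk ((hasDerivAt_id (1 : ℝ)).smul_const z.2)
  have hcomp : HasDerivAt (fun c : ℝ => L (z.1, c • z.2)) (velDeriv L z z.2) 1 := by
    refine HasFDerivAt.comp_hasDerivAt 1 ?_ hray
    simpa using hL.hasFDerivAt hz
  have hlin : HasDerivAt (fun c : ℝ => L (z.1, c • z.2)) (L z) 1 := by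
    refine HasDerivAt.congr_of_eventuallyEq (by simpa using (hasDerivAt_id (1 : ℝ)).mul_const (L z))
      ?_
    filter_upwards [lt_mem_nhds one_pos] with c hc using hL.map_smul z hz c hc
  exact hcomp.unique hlin

/-- The derivative of Euler's identity `L_v · v = L`. -/
lemma fderiv_velDeriv_apply_self (hL : IsConicLagrangian L U) (hz : z ∈ U) (y : E × E) :
    fderiv ℝ (velDeriv L) z y z.2 = posDeriv L z y.1 := by
  have hEuler : HasFDerivAt L _ z :=
    ((hL.hasFDerivAt_velDeriv hz).clm_apply hasFDerivAt_snd).congr_of_eventuallyEq <| by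
      filter_upwards [hL.isOpen.mem_nhds hz] with u hu using (hL.velDeriv_apply_self hu).symm
  have h := congr($(hEuler.fderiv) y)
  rw [fderiv_eq_posDeriv_add_velDeriv] at h
  simpa [add_comm (velDeriv L z y.2)] using h.symm

end IsConicLagrangian

/-- A regular gauge `b` for a conic Lagrangian `L`: a nowhere vanishing conic Lagrangian such that
the fibre Hessian `L_vv` is nondegenerate on `ker b_v`. Requiring `b (x, x')` to be constant then
fixes the parametrization of the extremals of `L`. -/
structure IsRegularGauge (b L : E × E → ℝ) (U : Set (E × E)) : Prop where
  isConic : IsConicLagrangian L U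
  isConic_gauge : IsConicLagrangian b U
  ne_zero : ∀ z ∈ U, b z ≠ 0
  nondegenerate : ∀ z ∈ U, ∀ w, velDeriv b z w = 0 →
    (∀ u, velDeriv b z u = 0 → fderiv ℝ (velDeriv L) z (0, w) u = 0) → w = 0

/-- The gauge-corrected fibre Hessian `L_vv + b_v ⊗ b_v`. -/
noncomputable def gaugedHessian (b L : E × E → ℝ) (z : E × E) : E →L[ℝ] E →L[ℝ] ℝ :=
  fderiv ℝ (velDeriv L) z ∘L .inr ℝ E E + (velDeriv b z).smulRight (velDeriv b z)

/-- The acceleration of the extremals of `L` along which the gauge `b` is constant: the solution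
`w` of `(L_vv + b_v ⊗ b_v) w = L_x - L_vx v - (b_x v) b_v`. -/
noncomputable def gaugedAccel (b L : E × E → ℝ) (z : E × E) : E :=
  (gaugedHessian b L z).inverse
    (posDeriv L z - fderiv ℝ (velDeriv L) z (z.2, 0) - posDeriv b z z.2 • velDeriv b z)

/-- The spray of the gauged Lagrangian: the autonomous vector field on pairs `(x, v)` whose
integral curves are the extremals along which the gauge is constant. -/
noncomputable def gaugedSpray (b L : E × E → ℝ) (z : E × E) : E × E :=
  (z.2, gaugedAccel b L z)

lemma gaugedHessian_apply (b L : E × E → ℝ) (z : E × E) (w : E) :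
    gaugedHessian b L z w = fderiv ℝ (velDeriv L) z (0, w) + velDeriv b z w • velDeriv b z := by
  simp [gaugedHessian]

lemma gaugedHessian_eq_sub_add_sub (b L : E × E → ℝ) (z : E × E) (X w : E) :
    gaugedHessian b L z w = fderiv ℝ (velDeriv L) z (X, w) - fderiv ℝ (velDeriv L) z (X, 0) +
      (fderiv ℝ b z (X, w) - posDeriv b z X) • velDeriv b z := by
  rw [gaugedHessian_apply, fderiv_eq_posDeriv_add_velDeriv b, add_sub_cancel_left, ← map_sub,
    Prod.mk_sub_mk, sub_self, sub_zero]

namespace IsRegularGauge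

variable {L b : E × E → ℝ} {U : Set (E × E)} {z : E × E}

/-- Since `L_vv v = 0`, pairing with the velocity only sees the correction term. -/
lemma gaugedHessian_apply_self (h : IsRegularGauge b L U) (hz : z ∈ U) (w : E) :
    gaugedHessian b L z w z.2 = velDeriv b z w * b z := by
  simp [gaugedHessian_apply, h.isConic.fderiv_velDeriv_apply_self hz,
    h.isConic_gauge.velDeriv_apply_self hz]

lemma gaugedHessian_injective (h : IsRegularGauge b L U) (hz : z ∈ U) :
    Function.Injective (gaugedHessian b L z) := by
  refine (injective_iff_map_eq_zero _).2 fun w hw => ?_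
  have hbw : velDeriv b z w = 0 := by
    simpa [hw, h.ne_zero z hz] using h.gaugedHessian_apply_self hz w
  refine h.nondegenerate z hz w hbw fun u _ => ?_
  simpa [gaugedHessian_apply, hbw] using congr($hw u)

lemma isInvertible_gaugedHessian [FiniteDimensional ℝ E] (h : IsRegularGauge b L U)
    (hz : z ∈ U) : (gaugedHessian b L z).IsInvertible := by
  have hrank : Module.finrank ℝ E = Module.finrank ℝ (E →L[ℝ] ℝ) := by
    rw [← LinearMap.toContinuousLinearMap.finrank_eq]
    exact Subspace.dual_finrank_eq.symm
  exact ⟨(LinearEquiv.ofInjectiveOfFinrankEq (gaugedHessian b L z).toLinearMap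
    (h.gaugedHessian_injective hz) hrank).toContinuousLinearEquiv, by ext; rfl⟩

lemma contDiffOn_gaugedAccel [FiniteDimensional ℝ E] (h : IsRegularGauge b L U) :
    ContDiffOn ℝ ∞ (gaugedAccel b L) U := by
  have hLv := h.isConic.contDiffOn_velDeriv
  have hbv := h.isConic_gauge.contDiffOn_velDeriv
  have hLvz : ContDiffOn ℝ ∞ (fderiv ℝ (velDeriv L)) U :=
    hLv.fderiv_of_isOpen h.isConic.isOpen le_rfl
  have hHess : ContDiffOn ℝ ∞ (gaugedHessian b L) U :=
    (hLvz.clm_comp contDiffOn_const).add (hbv.smulRight hbv)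
  have hinv : ContDiffOn ℝ ∞ (fun z => (gaugedHessian b L z).inverse) U := fun z hz =>
    (h.isInvertible_gaugedHessian hz).contDiffAt_map_inverse.comp_contDiffWithinAt z (hHess z hz)
  refine hinv.clm_apply ((h.isConic.contDiffOn_posDeriv.sub ?_).sub ?_)
  · exact hLvz.clm_apply (contDiff_snd.prodMk contDiff_const).contDiffOn
  · exact (h.isConic_gauge.contDiffOn_posDeriv.clm_apply contDiff_snd.contDiffOn).smul hbv

lemma contDiffOn_gaugedSpray [FiniteDimensional ℝ E] (h : IsRegularGauge b L U) :
    ContDiffOn ℝ ∞ (gaugedSpray b L) U :=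
  contDiff_snd.contDiffOn.prodMk h.contDiffOn_gaugedAccel

lemma gaugedHessian_gaugedAccel [FiniteDimensional ℝ E] (h : IsRegularGauge b L U)
    (hz : z ∈ U) : gaugedHessian b L z (gaugedAccel b L z) =
      posDeriv L z - fderiv ℝ (velDeriv L) z (z.2, 0) - posDeriv b z z.2 • velDeriv b z :=
  (h.isInvertible_gaugedHessian hz).self_apply_inverse _

/-- The component along the velocity of the corrected equation: the gauge is constant. -/
lemma fderiv_gauge_gaugedAccel [FiniteDimensional ℝ E] (h : IsRegularGauge b L U) (hz : z ∈ U) :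
    fderiv ℝ b z (z.2, gaugedAccel b L z) = 0 := by
  have hv := congr($(h.gaugedHessian_gaugedAccel hz) z.2)
  have hsum : (posDeriv b z z.2 + velDeriv b z (gaugedAccel b L z)) * b z = 0 := by
    simp only [h.gaugedHessian_apply_self hz, sub_apply, smul_apply, smul_eq_mul, sub_self,
      zero_sub, h.isConic.fderiv_velDeriv_apply_self hz,
      h.isConic_gauge.velDeriv_apply_self hz] at hv
    linarith
  rw [fderiv_eq_posDeriv_add_velDeriv]
  exact (mul_eq_zero.1 hsum).resolve_right (h.ne_zero z hz)

lemma fderiv_velDeriv_gaugedAccel [FiniteDimensional ℝ E] (h : IsRegularGauge b L U)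
    (hz : z ∈ U) : fderiv ℝ (velDeriv L) z (z.2, gaugedAccel b L z) = posDeriv L z := by
  have hspray := h.gaugedHessian_gaugedAccel hz
  rw [gaugedHessian_eq_sub_add_sub b L z z.2, h.fderiv_gauge_gaugedAccel hz] at hspray
  linear_combination (norm := module) hspray

lemma eq_smul_gaugedAccel [FiniteDimensional ℝ E] (h : IsRegularGauge b L U) (hz : z ∈ U)
    {c : ℝ} {w : E} (hL : fderiv ℝ (velDeriv L) z (c • z.2, w) = c • posDeriv L z)
    (hb : fderiv ℝ b z (c • z.2, w) = 0) : w = c • gaugedAccel b L z := by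
  have hX : (c • z.2, (0 : E)) = c • (z.2, (0 : E)) := by simp
  refine h.gaugedHessian_injective hz ?_
  rw [map_smul, h.gaugedHessian_gaugedAccel hz, gaugedHessian_eq_sub_add_sub b L z (c • z.2), hL,
    hb, hX, map_smul, map_smul, smul_eq_mul]
  module

end IsRegularGauge

/-- `x` is an extremal of `L` on `s`: its velocities stay in `U` and the Euler–Lagrange equation
`d/dt L_v (x, x') = L_x (x, x')` holds, which includes differentiability of the momentum. -/
def IsExtremalOn (L : E × E → ℝ) (U : Set (E × E)) (x : ℝ → E) (s : Set ℝ) : Prop :=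
  ∀ t ∈ s, (x t, deriv x t) ∈ U ∧
    HasDerivAt (fun u => velDeriv L (x u, deriv x u)) (posDeriv L (x t, deriv x t)) t

/-- The speed of the reparametrization which gives the gauge the constant value `c` along `y`. -/
noncomputable def gaugeSpeed (b : E × E → ℝ) (c : ℝ) (y : ℝ → E) (t : ℝ) : ℝ :=
  b (y t, deriv y t) / c

/-- The lift of `y` to pairs `(x, v)` by its velocity, rescaled so that the gauge takes the
value `c`. -/
noncomputable def gaugeLift (b : E × E → ℝ) (c : ℝ) (y : ℝ → E) (t : ℝ) : E × E :=
  (y t, (gaugeSpeed b c y t)⁻¹ • deriv y t)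

section Extremals

variable {L b : E × E → ℝ} {U : Set (E × E)} {s : Set ℝ} {y : ℝ → E} {c t : ℝ}

lemma contDiffOn_prodMk_deriv (hs : IsOpen s) (hy : ContDiffOn ℝ 2 y s) :
    ContDiffOn ℝ 1 (fun t => (y t, deriv y t)) s :=
  (hy.of_le one_le_two).prodMk (hy.deriv_of_isOpen hs (by norm_num))

lemma IsConicLagrangian.contDiffOn_gaugeSpeed (hb : IsConicLagrangian b U) (hs : IsOpen s)
    (hy : ContDiffOn ℝ 2 y s) (hyU : ∀ t ∈ s, (y t, deriv y t) ∈ U) :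
    ContDiffOn ℝ 1 (gaugeSpeed b c y) s :=
  ((hb.contDiffOn.of_le (mod_cast le_top)).comp (contDiffOn_prodMk_deriv hs hy) hyU).div_const c

lemma IsConicLagrangian.exists_hasDerivAt_gaugeLift (hb : IsConicLagrangian b U) (hs : IsOpen s)
    (hy : ContDiffOn ℝ 2 y s) (hyU : ∀ t ∈ s, (y t, deriv y t) ∈ U) (ht : t ∈ s)
    (hne : gaugeSpeed b c y t ≠ 0) :
    ∃ w, HasDerivAt (gaugeLift b c y) (gaugeSpeed b c y t • (gaugeLift b c y t).2, w) t := by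
  have hspeed : DifferentiableAt ℝ (gaugeSpeed b c y) t :=
    ((hb.contDiffOn_gaugeSpeed hs hy hyU).contDiffAt
      (hs.mem_nhds ht)).differentiableAt one_ne_zero
  have hjet : DifferentiableAt ℝ (fun t => (y t, deriv y t)) t :=
    ((contDiffOn_prodMk_deriv hs hy).contDiffAt (hs.mem_nhds ht)).differentiableAt one_ne_zero
  rw [gaugeLift, smul_inv_smul₀ hne]
  exact ⟨_, hjet.fst.hasDerivAt.prodMk ((hspeed.inv hne).smul hjet.snd).hasDerivAt⟩

lemma deriv_fst_of_hasDerivAt_gaugedSpray {α : ℝ → E × E}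
    (hα : HasDerivAt α (gaugedSpray b L (α t)) t) :
    deriv (fun t => (α t).1) t = (α t).2 :=
  HasDerivAt.deriv hα.fst

namespace IsRegularGauge

lemma isExtremalOn_of_hasDerivAt_gaugedSpray [FiniteDimensional ℝ E] (h : IsRegularGauge b L U)
    (hs : IsOpen s) {α : ℝ → E × E}
    (hα : ∀ t ∈ s, α t ∈ U ∧ HasDerivAt α (gaugedSpray b L (α t)) t) :
    IsExtremalOn L U (fun t => (α t).1) s := by
  have hlift : ∀ t ∈ s, ((α t).1, deriv (fun t => (α t).1) t) = α t := fun t ht => by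
    rw [deriv_fst_of_hasDerivAt_gaugedSpray (hα t ht).2]
  intro t ht
  rw [hlift t ht]
  refine ⟨(hα t ht).1, ?_⟩
  rw [← h.fderiv_velDeriv_gaugedAccel (hα t ht).1]
  refine ((h.isConic.hasFDerivAt_velDeriv (hα t ht).1).comp_hasDerivAt t
    (hα t ht).2).congr_of_eventuallyEq ?_
  filter_upwards [hs.mem_nhds ht] with u hu using congrArg (velDeriv L) (hlift u hu)

lemma gauge_gaugeLift (h : IsRegularGauge b L U) (ht : (y t, deriv y t) ∈ U)
    (hpos : 0 < gaugeSpeed b c y t) : b (gaugeLift b c y t) = c := by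
  rw [gaugeLift, h.isConic_gauge.map_smul _ ht _ (inv_pos.2 hpos), gaugeSpeed, inv_div,
    div_mul_cancel₀ c (h.ne_zero _ ht)]

lemma hasDerivAt_gaugeLift [FiniteDimensional ℝ E] (h : IsRegularGauge b L U) (hs : IsOpen s)
    (hy : ContDiffOn ℝ 2 y s) (hext : IsExtremalOn L U y s) (ht : t ∈ s)
    (hpos : 0 < gaugeSpeed b c y t) :
    HasDerivAt (gaugeLift b c y) (gaugeSpeed b c y t • gaugedSpray b L (gaugeLift b c y t)) t := by
  set σ := gaugeSpeed b c y
  have hyU : ∀ u ∈ s, (y u, deriv y u) ∈ U := fun u hu => (hext u hu).1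
  obtain ⟨w, hlift⟩ := h.isConic_gauge.exists_hasDerivAt_gaugeLift hs hy hyU ht hpos.ne'
  have hσ : ContinuousAt σ t :=
    (h.isConic_gauge.contDiffOn_gaugeSpeed hs hy hyU).continuousOn.continuousAt (hs.mem_nhds ht)
  have hnear : ∀ᶠ u in 𝓝 t, u ∈ s ∧ 0 < σ u :=
    (hs.eventually_mem ht).and (hσ.eventually (lt_mem_nhds hpos))
  have hliftU : gaugeLift b c y t ∈ U := h.isConic.smul_mem _ (hyU t ht) _ (inv_pos.2 hpos)
  have hgauge : fderiv ℝ b (gaugeLift b c y t) (σ t • (gaugeLift b c y t).2, w) = 0 := by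
    refine ((h.isConic_gauge.hasFDerivAt hliftU).comp_hasDerivAt t hlift).unique
      ((hasDerivAt_const t c).congr_of_eventuallyEq ?_)
    filter_upwards [hnear] with u hu using h.gauge_gaugeLift (hyU u hu.1) hu.2
  have hmomentum : fderiv ℝ (velDeriv L) (gaugeLift b c y t) (σ t • (gaugeLift b c y t).2, w) =
      σ t • posDeriv L (gaugeLift b c y t) := by
    have hforce : posDeriv L (y t, deriv y t) = σ t • posDeriv L (gaugeLift b c y t) := by
      rw [← h.isConic.posDeriv_smul hliftU hpos, gaugeLift, smul_inv_smul₀ hpos.ne']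
    rw [← hforce]
    refine ((h.isConic.hasFDerivAt_velDeriv hliftU).comp_hasDerivAt t hlift).unique
      ((hext t ht).2.congr_of_eventuallyEq ?_)
    filter_upwards [hnear] with u hu using h.isConic.velDeriv_smul (hyU u hu.1) (inv_pos.2 hu.2)
  rwa [h.eq_smul_gaugedAccel hliftU hmomentum hgauge] at hlift

lemma exists_integralCurve_gaugedSpray [FiniteDimensional ℝ E] (h : IsRegularGauge b L U)
    {z : E × E} (hz : z ∈ U) :
    ∃ α : ℝ → E × E, α 0 = z ∧ ∃ ε > 0, ContDiffOn ℝ ∞ α (Ioo (-ε) ε) ∧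
      ∀ t ∈ Ioo (-ε) ε, α t ∈ U ∧ HasDerivAt α (gaugedSpray b L (α t)) t := by
  simpa only [zero_sub, zero_add] using exists_contDiffOn_integralCurve (k := ⊤) le_top
    h.isConic.isOpen h.contDiffOn_gaugedSpray hz 0

lemma exists_reparametrization [FiniteDimensional ℝ E] (h : IsRegularGauge b L U)
    {α : ℝ → E × E} (hα : ∀ᶠ t in 𝓝 0, HasDerivAt α (gaugedSpray b L (α t)) t)
    (hs : IsOpen s) (hconn : s.OrdConnected) (h0 : 0 ∈ s) (hy : ContDiffOn ℝ 2 y s)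
    (hext : IsExtremalOn L U y s) (hinit : α 0 = (y 0, deriv y 0)) :
    ∃ δ > 0, ∃ φ : ℝ → ℝ, φ 0 = 0 ∧ StrictMonoOn φ (Ioo (-δ) δ) ∧
      ∀ t ∈ Ioo (-δ) δ, y t = (α (φ t)).1 := by
  have hU₀ := (hext 0 h0).1
  set σ := gaugeSpeed b (b (y 0, deriv y 0)) y with hσ_def
  have hσ₀ : σ 0 = 1 := div_self (h.ne_zero _ hU₀)
  have hσ : ContinuousOn σ s :=
    (h.isConic_gauge.contDiffOn_gaugeSpeed hs hy fun t ht => (hext t ht).1).continuousOn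
  have hσc : ContinuousAt σ 0 := hσ.continuousAt (hs.mem_nhds h0)
  obtain ⟨φ, hφ₀, hφ⟩ := exists_hasDerivAt_of_continuousOn hs hconn hσ h0
  have hnear : ∀ᶠ t in 𝓝 0, t ∈ s ∧ 0 < σ t :=
    (hs.eventually_mem h0).and (hσc.eventually (lt_mem_nhds (hσ₀ ▸ one_pos)))
  have hlift₀ : gaugeLift b (b (y 0, deriv y 0)) y 0 = (y 0, deriv y 0) := by
    rw [gaugeLift, ← hσ_def, hσ₀, inv_one, one_smul]
  have hlift : gaugeLift b (b (y 0, deriv y 0)) y =ᶠ[𝓝 0] α ∘ φ := by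
    refine eventuallyEq_comp_of_hasDerivAt_smul (f := gaugedSpray b L) (μ := σ) ?_ (by rwa [hφ₀]) ?_
      ?_ hσc (by rw [hlift₀, hφ₀, hinit])
    · rw [hlift₀]
      exact (h.contDiffOn_gaugedSpray.contDiffAt (h.isConic.isOpen.mem_nhds hU₀)).of_le
        (mod_cast le_top)
    · filter_upwards [hnear] with t ht using h.hasDerivAt_gaugeLift hs hy hext ht.1 ht.2
    · filter_upwards [hnear] with t ht using hφ t ht.1
  obtain ⟨δ, hδ, hball⟩ := Metric.eventually_nhds_iff_ball.1 (hnear.and hlift)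
  rw [Real.ball_eq_Ioo, zero_sub, zero_add] at hball
  refine ⟨δ, hδ, φ, hφ₀, ?_, fun t ht => congrArg Prod.fst (hball t ht).2⟩
  have hφ' : ∀ t ∈ Ioo (-δ) δ, HasDerivAt φ (σ t) t := fun t ht => hφ t (hball t ht).1.1
  refine strictMonoOn_of_deriv_pos (convex_Ioo _ _) (HasDerivAt.continuousOn hφ') ?_
  rw [interior_Ioo]
  intro t ht
  rw [(hφ' t ht).deriv]
  exact (hball t ht).1.2

end IsRegularGauge

end Extremals

theorem stmt11_general [FiniteDimensional ℝ E] {b L : E × E → ℝ} {U : Set (E × E)}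
    (h : IsRegularGauge b L U) {p ξ : E} (hξ : (p, ξ) ∈ U) :
    ∃ ε > 0, ∃ x : ℝ → E,
      (ContDiffOn ℝ ∞ x (Ioo (-ε) ε) ∧ x 0 = p ∧ deriv x 0 = ξ ∧
        IsExtremalOn L U x (Ioo (-ε) ε)) ∧
      ∀ y : ℝ → E,
        (ContDiffOn ℝ 2 y (Ioo (-ε) ε) ∧ y 0 = p ∧ deriv y 0 = ξ ∧
          IsExtremalOn L U y (Ioo (-ε) ε)) →
        ∃ δ > 0, ∃ φ : ℝ → ℝ, φ 0 = 0 ∧ StrictMonoOn φ (Ioo (-δ) δ) ∧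
          ∀ t ∈ Ioo (-δ) δ, y t = x (φ t) := by
  obtain ⟨α, hα₀, ε, hε, hαsm, hα⟩ := h.exists_integralCurve_gaugedSpray hξ
  have h0 : (0 : ℝ) ∈ Ioo (-ε) ε := ⟨neg_lt_zero.2 hε, hε⟩
  refine ⟨ε, hε, fun t => (α t).1, ⟨contDiff_fst.comp_contDiffOn hαsm, congrArg Prod.fst hα₀, ?_,
    h.isExtremalOn_of_hasDerivAt_gaugedSpray isOpen_Ioo hα⟩, ?_⟩
  · rw [deriv_fst_of_hasDerivAt_gaugedSpray (hα 0 h0).2, hα₀]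
  · rintro y ⟨hy, hy₀, hy₀', hext⟩
    have hα_near : ∀ᶠ t in 𝓝 0, HasDerivAt α (gaugedSpray b L (α t)) t := by
      filter_upwards [isOpen_Ioo.mem_nhds h0] with t ht using (hα t ht).2
    exact h.exists_reparametrization hα_near isOpen_Ioo ordConnected_Ioo h0 hy hext
      (by rw [hα₀, hy₀, hy₀'])

end ConicLagrangian

section Kropina

open Filter

lemma hasDerivAt_clm_pi {ι F : Type*} [Finite ι] [DecidableEq ι] [NormedAddCommGroup F]
    [NormedSpace ℝ F] {A : ℝ → (ι → ℝ) →L[ℝ] F} {A' : (ι → ℝ) →L[ℝ] F} {t : ℝ} :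
    HasDerivAt A A' t ↔
      ∀ k, HasDerivAt (fun u => A u (Pi.single k 1)) (A' (Pi.single k 1)) t := by
  have := Fintype.ofFinite ι
  let e := ContinuousLinearEquiv.piRing (𝕜 := ℝ) (E := F) ι
  have he : HasDerivAt A A' t ↔ HasDerivAt (fun u => e (A u)) (e A') t := by
    refine ⟨fun h => e.hasFDerivAt.comp_hasDerivAt t h, fun h => ?_⟩
    simpa [Function.comp_def] using e.symm.hasFDerivAt.comp_hasDerivAt t h
  exact he.trans hasDerivAt_pi

variable {n : ℕ} {g : Fin n → Fin n → (Fin n → ℝ) → ℝ} {ω : Fin n → (Fin n → ℝ) → ℝ}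

/-- The Kropina metric `F = g/ω` as a Lagrangian on pairs `(x, v)`. -/
noncomputable def kropina (g : Fin n → Fin n → (Fin n → ℝ) → ℝ) (ω : Fin n → (Fin n → ℝ) → ℝ)
    (z : (Fin n → ℝ) × (Fin n → ℝ)) : ℝ :=
  Fnum g z.1 z.2 / Fden ω z.1 z.2

/-- The pairs `(x, v)` with `ω_x(v) ≠ 0`, on which the Kropina metric is defined. -/
def kropinaDomain (ω : Fin n → (Fin n → ℝ) → ℝ) : Set ((Fin n → ℝ) × (Fin n → ℝ)) :=
  {z | Fden ω z.1 z.2 ≠ 0}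

lemma Fden_add_smul (x v w : Fin n → ℝ) (c : ℝ) :
    Fden ω x (v + c • w) = Fden ω x v + c * Fden ω x w := by
  simp only [Fden, Pi.add_apply, Pi.smul_apply, smul_eq_mul, Finset.mul_sum,
    ← Finset.sum_add_distrib]
  exact Finset.sum_congr rfl fun _ _ => by ring

lemma Fden_smul (x v : Fin n → ℝ) (c : ℝ) : Fden ω x (c • v) = c * Fden ω x v := by
  simp [Fden, Finset.mul_sum, mul_left_comm]

lemma Fnum_smul (x v : Fin n → ℝ) (c : ℝ) : Fnum g x (c • v) = c ^ 2 * Fnum g x v := by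
  simp only [Fnum, Pi.smul_apply, smul_eq_mul, Finset.mul_sum]
  exact Finset.sum_congr rfl fun _ _ => Finset.sum_congr rfl fun _ _ => by ring

lemma contDiff_uncurry_Fden (hω : ∀ i, ContDiff ℝ (⊤ : ℕ∞) (ω i)) :
    ContDiff ℝ (⊤ : ℕ∞) (Function.uncurry (Fden ω)) := by
  unfold Function.uncurry Fden
  fun_prop

lemma contDiff_uncurry_Fnum (hg : ∀ i j, ContDiff ℝ (⊤ : ℕ∞) (g i j)) :
    ContDiff ℝ (⊤ : ℕ∞) (Function.uncurry (Fnum g)) := by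
  unfold Function.uncurry Fnum
  fun_prop

lemma isConicLagrangian_Fden (hω : ∀ i, ContDiff ℝ (⊤ : ℕ∞) (ω i)) :
    IsConicLagrangian (Function.uncurry (Fden ω)) (kropinaDomain ω) where
  isOpen := isOpen_ne_fun (contDiff_uncurry_Fden hω).continuous continuous_const
  smul_mem z hz c hc := by
    simpa [kropinaDomain, Fden_smul, hc.ne'] using hz
  contDiffOn := (contDiff_uncurry_Fden hω).contDiffOn
  map_smul z _ c _ := Fden_smul z.1 z.2 c

lemma isConicLagrangian_kropina (hg : ∀ i j, ContDiff ℝ (⊤ : ℕ∞) (g i j))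
    (hω : ∀ i, ContDiff ℝ (⊤ : ℕ∞) (ω i)) :
    IsConicLagrangian (kropina g ω) (kropinaDomain ω) where
  isOpen := (isConicLagrangian_Fden hω).isOpen
  smul_mem := (isConicLagrangian_Fden hω).smul_mem
  contDiffOn := (contDiff_uncurry_Fnum hg).contDiffOn.div (contDiff_uncurry_Fden hω).contDiffOn
    fun _ hz => hz
  map_smul z hz c hc := by
    have hz' : Fden ω z.1 z.2 ≠ 0 := hz
    simp only [kropina, Fnum_smul, Fden_smul]
    field_simp

lemma hasFDerivAt_snd_apply {ι : Type*} [Finite ι] {E : Type*} [NormedAddCommGroup E]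
    [NormedSpace ℝ E] (l : ι) (z : E × (ι → ℝ)) :
    HasFDerivAt (fun z : E × (ι → ℝ) => z.2 l) ((.proj l : (ι → ℝ) →L[ℝ] ℝ) ∘L .snd ℝ _ _) z := by
  have := Fintype.ofFinite ι
  exact hasFDerivAt_pi'.1 hasFDerivAt_snd l

lemma fderiv_uncurry_Fden_apply (hω : ∀ i, ContDiff ℝ (⊤ : ℕ∞) (ω i))
    (z y : (Fin n → ℝ) × (Fin n → ℝ)) :
    fderiv ℝ (Function.uncurry (Fden ω)) z y =
      (∑ l, fderiv ℝ (ω l) z.1 y.1 * z.2 l) + Fden ω z.1 y.2 := by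
  have hωz (l) : HasFDerivAt (fun z : (Fin n → ℝ) × (Fin n → ℝ) => ω l z.1)
      (fderiv ℝ (ω l) z.1 ∘L .fst ℝ _ _) z :=
    ((hω l).differentiable (by simp) z.1).hasFDerivAt.comp z hasFDerivAt_fst
  have hsum : HasFDerivAt (Function.uncurry (Fden ω)) _ z :=
    HasFDerivAt.fun_sum (u := Finset.univ) fun l _ => (hωz l).mul (hasFDerivAt_snd_apply l z)
  rw [hsum.fderiv]
  simp [Fden, ← Finset.sum_add_distrib, add_comm, mul_comm]

lemma fderiv_uncurry_Fnum_apply (hg : ∀ i j, ContDiff ℝ (⊤ : ℕ∞) (g i j))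
    (z y : (Fin n → ℝ) × (Fin n → ℝ)) :
    fderiv ℝ (Function.uncurry (Fnum g)) z y =
      (∑ i, ∑ j, fderiv ℝ (g i j) z.1 y.1 * z.2 i * z.2 j) +
        ∑ i, ∑ j, g i j z.1 * (y.2 i * z.2 j + z.2 i * y.2 j) := by
  have hgz (i j) : HasFDerivAt (fun z : (Fin n → ℝ) × (Fin n → ℝ) => g i j z.1)
      (fderiv ℝ (g i j) z.1 ∘L .fst ℝ _ _) z :=
    ((hg i j).differentiable (by simp) z.1).hasFDerivAt.comp z hasFDerivAt_fst
  have hsum : HasFDerivAt (Function.uncurry (Fnum g)) _ z :=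
    HasFDerivAt.fun_sum (u := Finset.univ) fun i _ => HasFDerivAt.fun_sum (u := Finset.univ)
      fun j _ => ((hgz i j).mul (hasFDerivAt_snd_apply i z)).mul (hasFDerivAt_snd_apply j z)
  rw [hsum.fderiv]
  simp only [← Finset.sum_add_distrib, sum_apply]
  refine Finset.sum_congr rfl fun i _ => Finset.sum_congr rfl fun j _ => ?_
  simp only [Pi.mul_apply, smul_add, add_apply, smul_apply, ContinuousLinearMap.comp_apply,
    ContinuousLinearMap.coe_snd', ContinuousLinearMap.proj_apply, smul_eq_mul,
    ContinuousLinearMap.coe_fst']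
  ring

lemma fderiv_kropina_apply (hg : ∀ i j, ContDiff ℝ (⊤ : ℕ∞) (g i j))
    (hω : ∀ i, ContDiff ℝ (⊤ : ℕ∞) (ω i)) {z : (Fin n → ℝ) × (Fin n → ℝ)}
    (hz : z ∈ kropinaDomain ω) (y : (Fin n → ℝ) × (Fin n → ℝ)) :
    fderiv ℝ (kropina g ω) z y =
      (Fden ω z.1 z.2)⁻¹ * fderiv ℝ (Function.uncurry (Fnum g)) z y -
        ((Fden ω z.1 z.2)⁻¹) ^ 2 * fderiv ℝ (Function.uncurry (Fden ω)) z y *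
          Fnum g z.1 z.2 := by
  have hnum := ((contDiff_uncurry_Fnum hg).differentiable (by simp) z).hasFDerivAt
  have hden := ((contDiff_uncurry_Fden hω).differentiable (by simp) z).hasFDerivAt
  have hdiv : HasFDerivAt (kropina g ω) _ z :=
    hnum.mul ((hasDerivAt_inv hz).comp_hasFDerivAt z hden)
  rw [hdiv.fderiv]
  simp only [Function.uncurry, neg_smul, smul_neg, add_apply, neg_apply, smul_apply,
    smul_eq_mul, inv_pow]
  ring

lemma posDeriv_kropina_single (hg : ∀ i j, ContDiff ℝ (⊤ : ℕ∞) (g i j))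
    (hω : ∀ i, ContDiff ℝ (⊤ : ℕ∞) (ω i)) {z : (Fin n → ℝ) × (Fin n → ℝ)}
    (hz : z ∈ kropinaDomain ω) (k : Fin n) :
    posDeriv (kropina g ω) z (Pi.single k 1) = Fx g ω k z.1 z.2 := by
  simp [posDeriv, fderiv_kropina_apply hg hω hz, fderiv_uncurry_Fnum_apply hg,
    fderiv_uncurry_Fden_apply hω, Fx, pd, Fden]

lemma velDeriv_uncurry_Fnum (hsymm : ∀ i j, g i j = g j i)
    (hg : ∀ i j, ContDiff ℝ (⊤ : ℕ∞) (g i j)) (z : (Fin n → ℝ) × (Fin n → ℝ)) (w : Fin n → ℝ) :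
    velDeriv (Function.uncurry (Fnum g)) z w = 2 * ∑ i, ∑ j, g i j z.1 * z.2 i * w j := by
  have hswap : ∑ i, ∑ j, g i j z.1 * (w i * z.2 j) = ∑ i, ∑ j, g i j z.1 * (z.2 i * w j) := by
    rw [Finset.sum_comm]
    simp only [hsymm, mul_comm (w _)]
  simp [velDeriv, fderiv_uncurry_Fnum_apply hg, mul_add, Finset.sum_add_distrib, hswap, two_mul,
    mul_assoc]

lemma velDeriv_uncurry_Fden (hω : ∀ i, ContDiff ℝ (⊤ : ℕ∞) (ω i))
    (z : (Fin n → ℝ) × (Fin n → ℝ)) (w : Fin n → ℝ) :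
    velDeriv (Function.uncurry (Fden ω)) z w = Fden ω z.1 w := by
  simp [velDeriv, fderiv_uncurry_Fden_apply hω]

lemma velDeriv_kropina (hsymm : ∀ i j, g i j = g j i)
    (hg : ∀ i j, ContDiff ℝ (⊤ : ℕ∞) (g i j)) (hω : ∀ i, ContDiff ℝ (⊤ : ℕ∞) (ω i))
    {z : (Fin n → ℝ) × (Fin n → ℝ)} (hz : z ∈ kropinaDomain ω) (w : Fin n → ℝ) :
    velDeriv (kropina g ω) z w =
      2 * (Fden ω z.1 z.2)⁻¹ * (∑ i, ∑ j, g i j z.1 * z.2 i * w j) -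
        ((Fden ω z.1 z.2)⁻¹) ^ 2 * Fden ω z.1 w * Fnum g z.1 z.2 := by
  have hquot : velDeriv (kropina g ω) z w =
      (Fden ω z.1 z.2)⁻¹ * velDeriv (Function.uncurry (Fnum g)) z w -
        ((Fden ω z.1 z.2)⁻¹) ^ 2 * velDeriv (Function.uncurry (Fden ω)) z w * Fnum g z.1 z.2 :=
    fderiv_kropina_apply hg hω hz (0, w)
  rw [hquot, velDeriv_uncurry_Fnum hsymm hg, velDeriv_uncurry_Fden hω]
  ring

lemma velDeriv_kropina_single (hsymm : ∀ i j, g i j = g j i)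
    (hg : ∀ i j, ContDiff ℝ (⊤ : ℕ∞) (g i j)) (hω : ∀ i, ContDiff ℝ (⊤ : ℕ∞) (ω i))
    {z : (Fin n → ℝ) × (Fin n → ℝ)} (hz : z ∈ kropinaDomain ω) (k : Fin n) :
    velDeriv (kropina g ω) z (Pi.single k 1) = Fxi g ω k z.1 z.2 := by
  simp [velDeriv_kropina hsymm hg hω hz, Fxi, Fden, Pi.single_apply, hsymm k]

/-- On `ker ω` the momentum is affine along lines parallel to `ker ω`. -/
lemma fderiv_velDeriv_kropina_apply (hsymm : ∀ i j, g i j = g j i)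
    (hg : ∀ i j, ContDiff ℝ (⊤ : ℕ∞) (g i j)) (hω : ∀ i, ContDiff ℝ (⊤ : ℕ∞) (ω i))
    {z : (Fin n → ℝ) × (Fin n → ℝ)} (hz : z ∈ kropinaDomain ω) {w u : Fin n → ℝ}
    (hw : Fden ω z.1 w = 0) (hu : Fden ω z.1 u = 0) :
    fderiv ℝ (velDeriv (kropina g ω)) z (0, w) u =
      2 * (Fden ω z.1 z.2)⁻¹ * ∑ i, ∑ j, g i j z.1 * w i * u j := by
  have hmomentum (s : ℝ) : velDeriv (kropina g ω) (z.1, z.2 + s • w) u =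
      2 * (Fden ω z.1 z.2)⁻¹ * (∑ i, ∑ j, g i j z.1 * z.2 i * u j) +
        s * (2 * (Fden ω z.1 z.2)⁻¹ * ∑ i, ∑ j, g i j z.1 * w i * u j) := by
    have hden : Fden ω z.1 (z.2 + s • w) = Fden ω z.1 z.2 := by simp [Fden_add_smul, hw]
    have hzs : (z.1, z.2 + s • w) ∈ kropinaDomain ω := hden.trans_ne hz
    rw [velDeriv_kropina hsymm hg hω hzs]
    simp only [hden, hu, mul_zero, zero_mul, sub_zero, Pi.add_apply, Pi.smul_apply, smul_eq_mul,
      mul_add, add_mul, Finset.sum_add_distrib]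
    simp only [Finset.mul_sum]
    congr 1
    exact Finset.sum_congr rfl fun i _ => Finset.sum_congr rfl fun j _ => by ring
  have hline := (isConicLagrangian_kropina hg hω).hasDerivAt_velDeriv_line hz w u
  simp only [hmomentum] at hline
  exact hline.unique ((hasDerivAt_mul_const _).const_add _)

lemma isRegularGauge_Fden_kropina (hsymm : ∀ i j, g i j = g j i)
    (hg : ∀ i j, ContDiff ℝ (⊤ : ℕ∞) (g i j)) (hω : ∀ i, ContDiff ℝ (⊤ : ℕ∞) (ω i))
    (hnd : ∀ p v : Fin n → ℝ, Fden ω p v = 0 →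
      (∀ w, Fden ω p w = 0 → ∑ i, ∑ j, g i j p * v i * w j = 0) → v = 0) :
    IsRegularGauge (Function.uncurry (Fden ω)) (kropina g ω) (kropinaDomain ω) where
  isConic := isConicLagrangian_kropina hg hω
  isConic_gauge := isConicLagrangian_Fden hω
  ne_zero _ hz := hz
  nondegenerate z hz w hw hker := by
    have hz' : Fden ω z.1 z.2 ≠ 0 := hz
    simp only [velDeriv_uncurry_Fden hω] at hw hker
    refine hnd z.1 w hw fun u hu => ?_
    simpa [fderiv_velDeriv_kropina_apply hsymm hg hω hz hw hu, hz'] using hker u hu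

lemma isExtremalOn_kropina_iff (hsymm : ∀ i j, g i j = g j i)
    (hg : ∀ i j, ContDiff ℝ (⊤ : ℕ∞) (g i j)) (hω : ∀ i, ContDiff ℝ (⊤ : ℕ∞) (ω i))
    {x : ℝ → Fin n → ℝ} {s : Set ℝ} (hs : IsOpen s) :
    IsExtremalOn (kropina g ω) (kropinaDomain ω) x s ↔ IsKropinaGeodesicOn g ω x s := by
  have hcoord (hU : ∀ t ∈ s, (x t, deriv x t) ∈ kropinaDomain ω) (t : ℝ) (ht : t ∈ s) :
      HasDerivAt (fun u => velDeriv (kropina g ω) (x u, deriv x u))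
          (posDeriv (kropina g ω) (x t, deriv x t)) t ↔
        ∀ k, HasDerivAt (fun u => Fxi g ω k (x u) (deriv x u)) (Fx g ω k (x t) (deriv x t)) t := by
    refine hasDerivAt_clm_pi.trans (forall_congr' fun k => ?_)
    rw [posDeriv_kropina_single hg hω (hU t ht)]
    refine EventuallyEq.hasDerivAt_iff ?_
    filter_upwards [hs.mem_nhds ht] with u hu
      using velDeriv_kropina_single hsymm hg hω (hU u hu) k
  exact ⟨fun h t ht => ⟨(h t ht).1, (hcoord (fun u hu => (h u hu).1) t ht).1 (h t ht).2⟩,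
    fun h t ht => ⟨(h t ht).1, (hcoord (fun u hu => (h u hu).1) t ht).2 (h t ht).2⟩⟩

end Kropina

/-- Existence and local uniqueness (up to reparametrization) of the Kropina geodesic
with initial point `p` and initial velocity `ξ` transverse to `ker ω`. -/
theorem stmt11 {n : ℕ}
    (g : Fin n → Fin n → (Fin n → ℝ) → ℝ) (ω : Fin n → (Fin n → ℝ) → ℝ)
    (hgsymm : ∀ i j, g i j = g j i)
    (hgsm : ∀ i j, ContDiff ℝ (⊤ : ℕ∞) (g i j)) (hωsm : ∀ i, ContDiff ℝ (⊤ : ℕ∞) (ω i))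
    (hnd : ∀ (p v : Fin n → ℝ), (∑ l, ω l p * v l) = 0 →
      (∀ w : Fin n → ℝ, (∑ l, ω l p * w l) = 0 →
        (∑ i, ∑ j, g i j p * v i * w j) = 0) → v = 0)
    (p ξ : Fin n → ℝ) (hξ : (∑ l, ω l p * ξ l) ≠ 0) :
    ∃ ε > (0 : ℝ), ∃ x : ℝ → Fin n → ℝ,
      (ContDiffOn ℝ (⊤ : ℕ∞) x (Set.Ioo (-ε) ε) ∧ x 0 = p ∧ deriv x 0 = ξ ∧
        IsKropinaGeodesicOn g ω x (Set.Ioo (-ε) ε)) ∧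
      ∀ y : ℝ → Fin n → ℝ,
        (ContDiffOn ℝ (⊤ : ℕ∞) y (Set.Ioo (-ε) ε) ∧ y 0 = p ∧ deriv y 0 = ξ ∧
          IsKropinaGeodesicOn g ω y (Set.Ioo (-ε) ε)) →
        ∃ δ > (0 : ℝ), ∃ φ : ℝ → ℝ, φ 0 = 0 ∧ StrictMonoOn φ (Set.Ioo (-δ) δ) ∧
          ∀ t ∈ Set.Ioo (-δ) δ, y t = x (φ t) := by
  have hgauge := isRegularGauge_Fden_kropina hgsymm hgsm hωsm hnd
  simp only [← isExtremalOn_kropina_iff hgsymm hgsm hωsm isOpen_Ioo]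
  obtain ⟨ε, hε, x, hx, huniq⟩ := stmt11_general hgauge (p := p) (ξ := ξ) hξ
  exact ⟨ε, hε, x, hx, fun y ⟨hy, hy'⟩ => huniq y ⟨contDiffOn_infty.1 hy 2, hy'⟩⟩
end
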